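/- For all x ∈ [0,1], (1/(4π⁴))·∫₀^π∫₀^π∫₀^π∫₀^π (1 − (x/4)(cos φ₁ + cos φ₂ + cos φ₃ + cos φ₄))^{-1} dφ₁ dφ₂ dφ₃ dφ₄ = (4/π²)·∫₀^∞ [I₀(xt)]² I₀(t) [K₀(t)]³ t dt. -/

import Mathlib

open Real MeasureTheory Set

/-- Modified Bessel function `I₀(t) = (1/π)∫₀^π exp(t cos θ) dθ`. -/
noncomputable def I0 (t : ℝ) : ℝ := (1 / π) * ∫ θ in (0:ℝ)..π, exp (t * cos θ)

/-- Modified Bessel function `K₀(t) = ∫₀^∞ exp(−t cosh u) du`. -/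
noncomputable def K0 (t : ℝ) : ℝ := ∫ u in Ioi (0:ℝ), exp (-(t * Real.cosh u))

/-- Rising factorial `(a)ₙ = a(a+1)⋯(a+n−1)`. -/
noncomputable def ris (a : ℝ) (n : ℕ) : ℝ := ∏ k ∈ Finset.range n, (a + k)

/-- Generalized hypergeometric series `ₚF_q(a; b | x)`. -/
noncomputable def pFq (a b : List ℝ) (x : ℝ) : ℝ :=
  ∑' n : ℕ, ((a.map fun p => ris p n).prod / (b.map fun q => ris q n).prod) * x ^ n
    / (n.factorial : ℝ)

/-!
Since `1 / a = ∫₀^∞ exp (-a t) dt`, the lattice integral is a multiple of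
`∫₀^∞ exp (-4t) I₀(xt)⁴ dt`. Expanding in powers of `x` turns it into a series whose coefficients
are those of `I₀⁴`, while the right-hand side expands into a series in the moments of `I₀K₀³`.
The functions `I₀⁴` and `I₀K₀³` are annihilated by the same fifth-order operator; integration by
parts then shows that the moments and the coefficients satisfy the same three-term recurrence, up to
the factor `n!⁴ / 4ⁿ`. Hence the two sides are proportional as functions of `x`, with constant of
proportionality governed by `∫₀^∞ I₀K₀³ t dt`. This moment equals `π² / 16`: as `x → 1` the
integrals with a further factor `t²` diverge like `1 / (1 - x)`, at rates determined by
`I₀(t) ∼ exp t / √(2πt)` and `K₀(t) ∼ exp (-t) √(π / (2t))`.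
-/

open Filter Topology

section LaplaceMethod

variable {φ : ℝ → ℝ} {S : Set ℝ} {c : ℝ}

lemma integrableOn_exp_neg_mul_of_sq_le (hφ : Continuous φ) (hS : MeasurableSet S) (hc : 0 < c)
    (hle : ∀ u ∈ S, c * u ^ 2 ≤ φ u) {t : ℝ} (ht : 0 < t) :
    IntegrableOn (fun u ↦ exp (-(t * φ u))) S := by
  refine (integrable_exp_neg_mul_sq (mul_pos ht hc)).integrableOn.mono'
    (by fun_prop : Continuous _).aestronglyMeasurable (ae_restrict_of_forall_mem hS fun u hu ↦ ?_)
  rw [norm_of_nonneg (exp_pos _).le, neg_mul, mul_assoc]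
  gcongr
  exact hle u hu

lemma setIntegral_exp_neg_mul_le (hφ : Continuous φ) (hS : MeasurableSet S) (hS0 : S ⊆ Ioi 0)
    (hc : 0 < c) (hle : ∀ u ∈ S, c * u ^ 2 ≤ φ u) {t : ℝ} (ht : 0 < t) :
    ∫ u in S, exp (-(t * φ u)) ≤ √(π / (t * c)) / 2 := by
  have hgauss := integrable_exp_neg_mul_sq (mul_pos ht hc)
  calc ∫ u in S, exp (-(t * φ u))
      ≤ ∫ u in S, exp (-(t * c) * u ^ 2) := by
        refine setIntegral_mono_on (integrableOn_exp_neg_mul_of_sq_le hφ hS hc hle ht)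
          hgauss.integrableOn hS fun u hu ↦ ?_
        rw [neg_mul, mul_assoc]
        gcongr
        exact hle u hu
    _ ≤ ∫ u in Ioi 0, exp (-(t * c) * u ^ 2) :=
        setIntegral_mono_set hgauss.integrableOn (ae_of_all _ fun _ ↦ (exp_pos _).le)
          hS0.eventuallyLE
    _ = √(π / (t * c)) / 2 := integral_gaussian_Ioi _

lemma sqrt_mul_setIntegral_exp_neg_mul (hS : MeasurableSet S) (hS0 : S ⊆ Ioi 0) {t : ℝ}
    (ht : 0 < t) :
    √t * ∫ u in S, exp (-(t * φ u)) =
      ∫ v in Ioi 0, S.indicator (fun u ↦ exp (-(t * φ u))) ((√t)⁻¹ * v) := by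
  have hsqrt : 0 < √t := sqrt_pos.2 ht
  rw [integral_comp_mul_left_Ioi _ _ (inv_pos.2 hsqrt), mul_zero, inv_inv, smul_eq_mul,
    setIntegral_indicator hS, inter_eq_self_of_subset_right hS0]

/-- Laplace's method at an endpoint: after the substitution `u = v / √t` the integrands converge
to `exp (-a v²)` and are dominated by `exp (-c v²)`. -/
lemma tendsto_sqrt_mul_setIntegral_exp_neg_mul (hφ : Continuous φ) (hS : MeasurableSet S)
    (hS0 : S ⊆ Ioi 0) (hSnhds : S ∈ 𝓝[>] (0 : ℝ)) (hc : 0 < c) (hle : ∀ u ∈ S, c * u ^ 2 ≤ φ u)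
    {a : ℝ} (hlim : Tendsto (fun u ↦ φ u / u ^ 2) (𝓝[>] 0) (𝓝 a)) :
    Tendsto (fun t ↦ √t * ∫ u in S, exp (-(t * φ u))) atTop (𝓝 (√(π / a) / 2)) := by
  rw [← integral_gaussian_Ioi a]
  refine Tendsto.congr' ((eventually_gt_atTop 0).mono fun t ht ↦
    (sqrt_mul_setIntegral_exp_neg_mul (φ := φ) hS hS0 ht).symm) ?_
  have hscale : ∀ {t : ℝ}, 0 < t → ∀ v, v ^ 2 = t * ((√t)⁻¹ * v) ^ 2 := fun ht v ↦ by
    rw [mul_pow, inv_pow, sq_sqrt ht.le, mul_inv_cancel_left₀ ht.ne']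
  refine tendsto_integral_filter_of_dominated_convergence (fun v ↦ exp (-c * v ^ 2)) ?_ ?_
    (integrable_exp_neg_mul_sq hc).integrableOn (ae_restrict_of_forall_mem measurableSet_Ioi ?_)
  · refine .of_forall fun t ↦ Measurable.aestronglyMeasurable ?_
    exact (Measurable.indicator (by fun_prop) hS).comp (by fun_prop)
  · filter_upwards [eventually_gt_atTop 0] with t ht
    refine .of_forall fun v ↦ ?_
    by_cases hv : (√t)⁻¹ * v ∈ S
    · rw [indicator_of_mem hv, norm_of_nonneg (exp_pos _).le, hscale ht v]
      gcongr
      nlinarith [hle _ hv]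
    · rw [indicator_of_notMem hv, norm_zero]
      positivity
  · intro v hv
    have hw : Tendsto (fun t ↦ (√t)⁻¹ * v) atTop (𝓝[>] 0) := by
      refine tendsto_nhdsWithin_iff.2 ⟨?_, (eventually_gt_atTop 0).mono fun t ht ↦ ?_⟩
      · simpa using (tendsto_inv_atTop_zero.comp tendsto_sqrt_atTop).mul_const v
      · exact mul_pos (inv_pos.2 (sqrt_pos.2 ht)) hv
    refine Tendsto.congr' ?_ ((hlim.comp hw).neg.mul_const (v ^ 2)).rexp
    filter_upwards [hw.eventually hSnhds, eventually_gt_atTop 0] with t htS ht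
    have hw0 : (√t)⁻¹ * v ≠ 0 := (hS0 htS).ne'
    rw [indicator_of_mem htS, hscale ht v, Function.comp_apply, neg_mul, mul_left_comm,
      div_mul_cancel₀ _ (pow_ne_zero 2 hw0)]

end LaplaceMethod

lemma tendsto_sq_div_sq_of_hasDerivAt {f : ℝ → ℝ} (hf : HasDerivAt f 1 0) (hf0 : f 0 = 0) :
    Tendsto (fun u ↦ 2 * f (u / 2) ^ 2 / u ^ 2) (𝓝[>] 0) (𝓝 (1 / 2)) := by
  have hhalf : Tendsto (fun u : ℝ ↦ u / 2) (𝓝[>] 0) (𝓝[≠] 0) := by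
    refine tendsto_nhdsWithin_iff.2 ⟨?_, ?_⟩
    · simpa using (continuous_id.div_const (2 : ℝ)).tendsto' 0 0 (by simp) |>.mono_left
        nhdsWithin_le_nhds
    · filter_upwards [self_mem_nhdsWithin] with u hu
      exact (half_pos hu).ne'
  have hslope := (((hasDerivAt_iff_tendsto_slope_zero.1 hf).comp hhalf).pow 2).div_const 2
  rw [one_pow] at hslope
  refine hslope.congr' ?_
  filter_upwards [self_mem_nhdsWithin] with u (hu : 0 < u)
  simp only [Function.comp_apply, hf0, zero_add, sub_zero, smul_eq_mul]
  field_simp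

/-! ### The Bessel function `I₀` -/

/-- The modified Bessel function `I₁`, the derivative of `I₀`. -/
noncomputable def I1 (t : ℝ) : ℝ := (1 / π) * ∫ θ in (0 : ℝ)..π, cos θ * exp (t * cos θ)

lemma hasDerivAt_integral_cos_pow_mul_exp (n : ℕ) (t : ℝ) :
    HasDerivAt (fun t ↦ ∫ θ in (0 : ℝ)..π, cos θ ^ n * exp (t * cos θ))
      (∫ θ in (0 : ℝ)..π, cos θ ^ (n + 1) * exp (t * cos θ)) t := by
  have hset : ProbabilityTheory.integrableExpSet cos (volume.restrict (Ioc 0 π)) = univ :=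
    eq_univ_of_forall fun s ↦
      ((by fun_prop : Continuous fun θ ↦ exp (s * cos θ)).integrableOn_Ioc)
  simp only [intervalIntegral.integral_of_le pi_pos.le]
  exact ProbabilityTheory.hasDerivAt_integral_pow_mul_exp_real (by simp [hset]) n

lemma hasDerivAt_I0 (t : ℝ) : HasDerivAt I0 (I1 t) t := by
  have hderiv := (hasDerivAt_integral_cos_pow_mul_exp 0 t).const_mul (1 / π)
  simp only [pow_zero, one_mul, zero_add, pow_one] at hderiv
  exact hderiv

lemma hasDerivAt_I1 (t : ℝ) :
    HasDerivAt I1 ((1 / π) * ∫ θ in (0 : ℝ)..π, cos θ ^ 2 * exp (t * cos θ)) t := by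
  have hderiv := (hasDerivAt_integral_cos_pow_mul_exp 1 t).const_mul (1 / π)
  simp only [pow_one, Nat.reduceAdd] at hderiv
  exact hderiv

lemma continuous_I0 : Continuous I0 :=
  continuous_iff_continuousAt.2 fun t ↦ (hasDerivAt_I0 t).continuousAt

lemma I1_eq_mul_integral_sin_sq (t : ℝ) :
    I1 t = t * ((1 / π) * ∫ θ in (0 : ℝ)..π, sin θ ^ 2 * exp (t * cos θ)) := by
  have hparts := intervalIntegral.integral_mul_deriv_eq_deriv_mul (a := 0) (b := π)
    (u := fun θ ↦ exp (t * cos θ)) (v := sin)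
    (fun θ _ ↦ ((hasDerivAt_cos θ).const_mul t).exp) (fun θ _ ↦ hasDerivAt_sin θ)
    ((by fun_prop : Continuous _).intervalIntegrable _ _)
    ((by fun_prop : Continuous _).intervalIntegrable _ _)
  have hsin : ∫ θ in (0 : ℝ)..π, exp (t * cos θ) * (t * -sin θ) * sin θ =
      -(t * ∫ θ in (0 : ℝ)..π, sin θ ^ 2 * exp (t * cos θ)) := by
    rw [← intervalIntegral.integral_const_mul, ← intervalIntegral.integral_neg]
    congr 1 with θ
    ring
  simp only [mul_comm (exp _) (cos _), sin_pi, sin_zero, mul_zero, sub_zero, zero_sub, hsin,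
    neg_neg] at hparts
  rw [I1, hparts]
  ring

lemma hasDerivAt_mul_I1 (t : ℝ) : HasDerivAt (fun t ↦ t * I1 t) (t * I0 t) t := by
  have hpyth : ∫ θ in (0 : ℝ)..π, exp (t * cos θ) =
      (∫ θ in (0 : ℝ)..π, sin θ ^ 2 * exp (t * cos θ)) +
        ∫ θ in (0 : ℝ)..π, cos θ ^ 2 * exp (t * cos θ) := by
    rw [← intervalIntegral.integral_add ((by fun_prop : Continuous _).intervalIntegrable _ _)
      ((by fun_prop : Continuous _).intervalIntegrable _ _)]
    simp only [← add_mul, sin_sq_add_cos_sq, one_mul]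
  refine ((hasDerivAt_id t).mul (hasDerivAt_I1 t)).congr_deriv ?_
  rw [I1_eq_mul_integral_sin_sq, I0, hpyth, id]
  ring

lemma I0_nonneg (t : ℝ) : 0 ≤ I0 t :=
  mul_nonneg (by positivity)
    (intervalIntegral.integral_nonneg pi_pos.le fun _ _ ↦ (exp_pos _).le)

lemma I0_le_exp {t : ℝ} (ht : 0 ≤ t) : I0 t ≤ exp t := by
  have hle : ∫ θ in (0 : ℝ)..π, exp (t * cos θ) ≤ ∫ _ in (0 : ℝ)..π, exp t := by
    refine intervalIntegral.integral_mono_on pi_pos.le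
      ((by fun_prop : Continuous _).intervalIntegrable _ _) intervalIntegrable_const fun θ _ ↦ ?_
    gcongr
    exact mul_le_of_le_one_right ht (cos_le_one θ)
  rw [I0, one_div, inv_mul_le_iff₀ pi_pos]
  simpa using hle

lemma I1_nonneg {t : ℝ} (ht : 0 ≤ t) : 0 ≤ I1 t := by
  rw [I1_eq_mul_integral_sin_sq]
  have : 0 ≤ ∫ θ in (0 : ℝ)..π, sin θ ^ 2 * exp (t * cos θ) :=
    intervalIntegral.integral_nonneg pi_pos.le fun _ _ ↦ by positivity
  positivity

lemma I1_le_mul_exp {t : ℝ} (ht : 0 ≤ t) : I1 t ≤ t * exp t := by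
  have hle : ∫ θ in (0 : ℝ)..π, sin θ ^ 2 * exp (t * cos θ) ≤
      ∫ θ in (0 : ℝ)..π, exp (t * cos θ) := by
    refine intervalIntegral.integral_mono_on pi_pos.le
      ((by fun_prop : Continuous _).intervalIntegrable _ _)
      ((by fun_prop : Continuous _).intervalIntegrable _ _) fun θ _ ↦ ?_
    exact mul_le_of_le_one_left (exp_pos _).le (sin_sq_le_one θ)
  calc I1 t ≤ t * I0 t := by
        rw [I1_eq_mul_integral_sin_sq, I0]
        gcongr
    _ ≤ t * exp t := by
        gcongr
        exact I0_le_exp ht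

lemma I0_eq_integral_cosh (t : ℝ) : I0 t = (1 / π) * ∫ θ in (0 : ℝ)..π, Real.cosh (t * cos θ) := by
  have hreflect : ∫ θ in (0 : ℝ)..π, exp (-(t * cos θ)) = ∫ θ in (0 : ℝ)..π, exp (t * cos θ) := by
    simpa using intervalIntegral.integral_comp_sub_left (a := 0) (b := π)
      (fun θ ↦ exp (t * cos θ)) π
  simp only [Real.cosh_eq]
  rw [intervalIntegral.integral_div, intervalIntegral.integral_add
    ((by fun_prop : Continuous _).intervalIntegrable _ _)
    ((by fun_prop : Continuous _).intervalIntegrable _ _), hreflect, add_self_div_two, I0]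

lemma integral_cos_pow_two_mul (n : ℕ) :
    ∫ θ in (0 : ℝ)..π, cos θ ^ (2 * n) =
      π * ((2 * n).factorial / (4 ^ n * (n.factorial : ℝ) ^ 2)) := by
  induction n with
  | zero => simp
  | succ n ih =>
    rw [mul_add_one, integral_cos_pow, ih]
    simp only [Nat.factorial_succ, sin_pi, sin_zero, mul_zero, sub_zero, zero_div, zero_add,
      pow_succ (4 : ℝ)]
    push_cast
    field_simp
    ring

lemma hasSum_I0 (t : ℝ) :
    HasSum (fun n : ℕ ↦ 1 / (4 ^ n * (n.factorial : ℝ) ^ 2) * t ^ (2 * n)) (I0 t) := by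
  have hcosh : HasSum (fun n : ℕ ↦ ∫ θ in (0 : ℝ)..π, (t * cos θ) ^ (2 * n) / (2 * n).factorial)
      (∫ θ in (0 : ℝ)..π, Real.cosh (t * cos θ)) := by
    refine intervalIntegral.hasSum_integral_of_dominated_convergence
      (fun n _ ↦ t ^ (2 * n) / (2 * n).factorial)
      (fun n ↦ (by fun_prop : Continuous _).aestronglyMeasurable)
      (fun n ↦ .of_forall fun θ _ ↦ ?_) (.of_forall fun θ _ ↦ (Real.hasSum_cosh t).summable)
      intervalIntegrable_const (.of_forall fun θ _ ↦ Real.hasSum_cosh _)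
    rw [mul_pow, norm_of_nonneg (by simp only [pow_mul]; positivity)]
    gcongr
    refine mul_le_of_le_one_right (by simp only [pow_mul]; positivity) ?_
    rw [pow_mul]
    exact pow_le_one₀ (sq_nonneg _) (cos_sq_le_one θ)
  rw [I0_eq_integral_cosh]
  refine (hcosh.mul_left (1 / π)).congr_fun fun n ↦ ?_
  simp only [mul_pow, intervalIntegral.integral_div, intervalIntegral.integral_const_mul,
    integral_cos_pow_two_mul]
  field_simp

/-- `√t e⁻ᵗ I₀(t)`, which removes the exponential growth of `I₀` at infinity. -/
noncomputable def scaledI0 (t : ℝ) : ℝ := √t * exp (-t) * I0 t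

lemma scaledI0_eq (t : ℝ) :
    scaledI0 t = (1 / π) * (√t * ∫ u in Ioc 0 π, exp (-(t * (1 - cos u)))) := by
  have hexp : ∫ u in Ioc 0 π, exp (-(t * (1 - cos u))) =
      exp (-t) * ∫ u in Ioc 0 π, exp (t * cos u) := by
    rw [← integral_const_mul]
    simp only [← exp_add]
    congr 1 with u
    ring_nf
  rw [scaledI0, I0, intervalIntegral.integral_of_le pi_pos.le, hexp]
  ring

lemma two_div_pi_sq_mul_sq_le_one_sub_cos {u : ℝ} (hu : u ∈ Ioc 0 π) :
    2 / π ^ 2 * u ^ 2 ≤ 1 - cos u := by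
  linarith [cos_le_one_sub_mul_cos_sq (x := u) (by rw [abs_of_pos hu.1]; exact hu.2)]

lemma scaledI0_nonneg (t : ℝ) : 0 ≤ scaledI0 t :=
  mul_nonneg (by positivity) (I0_nonneg t)

lemma continuous_scaledI0 : Continuous scaledI0 := by
  have := continuous_I0
  unfold scaledI0
  fun_prop

lemma scaledI0_le_one {t : ℝ} (ht : 0 < t) : scaledI0 t ≤ 1 := by
  have hint := setIntegral_exp_neg_mul_le (φ := fun u ↦ 1 - cos u) (by fun_prop) measurableSet_Ioc
    Ioc_subset_Ioi_self (by positivity) (fun u ↦ two_div_pi_sq_mul_sq_le_one_sub_cos) ht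
  have hgauss : √t * (√(π / (t * (2 / π ^ 2))) / 2) ≤ π := by
    rw [← mul_div_assoc, ← sqrt_mul ht.le, div_le_iff₀ two_pos]
    refine sqrt_le_iff.2 ⟨by positivity, ?_⟩
    field_simp
    nlinarith [pi_le_four]
  rw [scaledI0_eq, one_div, inv_mul_le_iff₀ pi_pos, mul_one]
  exact (mul_le_mul_of_nonneg_left hint (sqrt_nonneg t)).trans hgauss

lemma tendsto_scaledI0 : Tendsto scaledI0 atTop (𝓝 (√(π / 2) / π)) := by
  have hlim : Tendsto (fun u : ℝ ↦ (1 - cos u) / u ^ 2) (𝓝[>] 0) (𝓝 (1 / 2)) := by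
    refine (tendsto_sq_div_sq_of_hasDerivAt (by simpa using hasDerivAt_sin 0) sin_zero).congr
      fun u ↦ ?_
    rw [sin_sq_eq_half_sub, mul_div_cancel₀ u two_ne_zero]
    ring
  have hlaplace := tendsto_sqrt_mul_setIntegral_exp_neg_mul (by fun_prop) measurableSet_Ioc
    Ioc_subset_Ioi_self (Ioc_mem_nhdsGT pi_pos) (by positivity)
    (fun u ↦ two_div_pi_sq_mul_sq_le_one_sub_cos) hlim
  have hconst : (1 / π) * (√(π / (1 / 2)) / 2) = √(π / 2) / π := by
    rw [show π / (1 / 2) = 2 ^ 2 * (π / 2) by ring, sqrt_mul (by norm_num), sqrt_sq two_pos.le]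
    ring
  rw [← hconst]
  exact (hlaplace.const_mul (1 / π)).congr fun t ↦ (scaledI0_eq t).symm

/-! ### The Bessel function `K₀` -/

/-- The modified Bessel function `K₁ = -K₀'`. -/
noncomputable def K1 (t : ℝ) : ℝ := ∫ u in Ioi (0 : ℝ), Real.cosh u * exp (-(t * Real.cosh u))

lemma one_add_sq_div_two_le_cosh (u : ℝ) : 1 + u ^ 2 / 2 ≤ Real.cosh u := by
  have hpartial := sum_le_hasSum (Finset.range 2)
    (fun n _ ↦ by simp only [pow_mul]; positivity) (Real.hasSum_cosh u)
  simpa [Finset.sum_range_succ] using hpartial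

lemma half_mul_sq_le_cosh_sub_one (u : ℝ) : 1 / 2 * u ^ 2 ≤ Real.cosh u - 1 := by
  linarith [one_add_sq_div_two_le_cosh u]

lemma integrableOn_exp_neg_mul_cosh {t : ℝ} (ht : 0 < t) :
    IntegrableOn (fun u ↦ exp (-(t * Real.cosh u))) (Ioi 0) :=
  integrableOn_exp_neg_mul_of_sq_le Real.continuous_cosh measurableSet_Ioi one_half_pos
    (fun u _ ↦ by linarith [half_mul_sq_le_cosh_sub_one u]) ht

lemma neg_mem_interior_integrableExpSet_cosh {t : ℝ} (ht : 0 < t) :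
    -t ∈ interior
      (ProbabilityTheory.integrableExpSet Real.cosh (volume.restrict (Ioi 0))) := by
  refine mem_interior.2 ⟨Iio 0, fun s hs ↦ ?_, isOpen_Iio, neg_lt_zero.2 ht⟩
  simpa [ProbabilityTheory.integrableExpSet, IntegrableOn] using
    integrableOn_exp_neg_mul_cosh (neg_pos.2 hs)

lemma integrableOn_cosh_pow_mul_exp (n : ℕ) {t : ℝ} (ht : 0 < t) :
    IntegrableOn (fun u ↦ Real.cosh u ^ n * exp (-(t * Real.cosh u))) (Ioi 0) := by
  simpa [IntegrableOn] using
    ProbabilityTheory.integrable_pow_mul_exp_of_mem_interior_integrableExpSet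
      (neg_mem_interior_integrableExpSet_cosh ht) n

lemma hasDerivAt_integral_cosh_pow_mul_exp (n : ℕ) {t : ℝ} (ht : 0 < t) :
    HasDerivAt (fun t ↦ ∫ u in Ioi (0 : ℝ), Real.cosh u ^ n * exp (-(t * Real.cosh u)))
      (-∫ u in Ioi (0 : ℝ), Real.cosh u ^ (n + 1) * exp (-(t * Real.cosh u))) t := by
  simpa [Function.comp_def] using (ProbabilityTheory.hasDerivAt_integral_pow_mul_exp_real
    (neg_mem_interior_integrableExpSet_cosh ht) n).scomp t (hasDerivAt_neg t)

lemma hasDerivAt_K0 {t : ℝ} (ht : 0 < t) : HasDerivAt K0 (-K1 t) t := by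
  have hderiv := hasDerivAt_integral_cosh_pow_mul_exp 0 ht
  simp only [pow_zero, one_mul, zero_add, pow_one] at hderiv
  exact hderiv

lemma hasDerivAt_K1 {t : ℝ} (ht : 0 < t) :
    HasDerivAt K1 (-∫ u in Ioi (0 : ℝ), Real.cosh u ^ 2 * exp (-(t * Real.cosh u))) t := by
  have hderiv := hasDerivAt_integral_cosh_pow_mul_exp 1 ht
  simp only [pow_one, Nat.reduceAdd] at hderiv
  exact hderiv

lemma continuousOn_K0 : ContinuousOn K0 (Ioi 0) := fun _ ht ↦
  (hasDerivAt_K0 ht).continuousAt.continuousWithinAt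

/-- `∫ (sinh u · exp (-t cosh u))' du = 0` over `(0, ∞)`, with `sinh² = cosh² - 1`. -/
lemma K1_eq_mul_integral_cosh_sq_sub {t : ℝ} (ht : 0 < t) :
    K1 t = t * ((∫ u in Ioi (0 : ℝ), Real.cosh u ^ 2 * exp (-(t * Real.cosh u))) - K0 t) := by
  have hint0 := integrableOn_exp_neg_mul_cosh ht
  have hint1 : IntegrableOn (fun u ↦ Real.cosh u * exp (-(t * Real.cosh u))) (Ioi 0) := by
    simpa using integrableOn_cosh_pow_mul_exp 1 ht
  have hint2 := integrableOn_cosh_pow_mul_exp 2 ht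
  have hint20 : IntegrableOn (fun u ↦ t * (Real.cosh u ^ 2 * exp (-(t * Real.cosh u))
      - exp (-(t * Real.cosh u)))) (Ioi 0) := (hint2.sub hint0).const_mul t
  have hderiv : ∀ u, HasDerivAt (fun u ↦ Real.sinh u * exp (-(t * Real.cosh u)))
      (Real.cosh u * exp (-(t * Real.cosh u)) - t * (Real.cosh u ^ 2 * exp (-(t * Real.cosh u))
        - exp (-(t * Real.cosh u)))) u := fun u ↦ by
    refine ((Real.hasDerivAt_sinh u).mul
      ((Real.hasDerivAt_cosh u).const_mul t).fun_neg.exp).congr_deriv ?_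
    linear_combination t * exp (-(t * Real.cosh u)) * Real.cosh_sq u
  have hint_sinh : IntegrableOn (fun u ↦ Real.sinh u * exp (-(t * Real.cosh u))) (Ioi 0) := by
    refine hint1.mono' (by fun_prop : Continuous _).aestronglyMeasurable (.of_forall fun u ↦ ?_)
    rw [norm_mul, norm_eq_abs, norm_of_nonneg (exp_pos _).le, Real.abs_sinh, ← Real.cosh_abs]
    gcongr
    exact (Real.sinh_lt_cosh _).le
  have hint_deriv := hint1.sub hint20
  have hzero := integral_Ioi_of_hasDerivAt_of_tendsto' (fun u _ ↦ hderiv u) hint_deriv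
    (tendsto_zero_of_hasDerivAt_of_integrableOn_Ioi (fun u _ ↦ hderiv u) hint_deriv hint_sinh)
  rw [integral_sub hint1 hint20, integral_const_mul,
    integral_sub hint2 hint0, Real.sinh_zero, zero_mul, sub_zero] at hzero
  exact sub_eq_zero.1 hzero

lemma hasDerivAt_mul_K1 {t : ℝ} (ht : 0 < t) :
    HasDerivAt (fun t ↦ t * K1 t) (-(t * K0 t)) t := by
  refine ((hasDerivAt_id t).mul (hasDerivAt_K1 ht)).congr_deriv ?_
  rw [id, K1_eq_mul_integral_cosh_sq_sub ht]
  ring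

lemma K0_nonneg (t : ℝ) : 0 ≤ K0 t :=
  integral_nonneg fun _ ↦ (exp_pos _).le

lemma K1_nonneg (t : ℝ) : 0 ≤ K1 t :=
  integral_nonneg fun u ↦ mul_nonneg (Real.cosh_pos u).le (exp_pos _).le

/-- `√t eᵗ K₀(t)`, which removes the exponential decay of `K₀` at infinity. -/
noncomputable def scaledK0 (t : ℝ) : ℝ := √t * exp t * K0 t

lemma scaledK0_eq (t : ℝ) :
    scaledK0 t = √t * ∫ u in Ioi 0, exp (-(t * (Real.cosh u - 1))) := by
  rw [scaledK0, K0, mul_assoc, ← integral_const_mul]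
  simp only [← exp_add]
  congr 2 with u
  ring_nf

lemma scaledK0_nonneg (t : ℝ) : 0 ≤ scaledK0 t :=
  mul_nonneg (by positivity) (K0_nonneg t)

lemma continuousOn_scaledK0 : ContinuousOn scaledK0 (Ioi 0) :=
  (by fun_prop : Continuous fun t ↦ √t * exp t).continuousOn.mul continuousOn_K0

lemma scaledK0_le_two {t : ℝ} (ht : 0 < t) : scaledK0 t ≤ 2 := by
  have hint := setIntegral_exp_neg_mul_le (φ := fun u ↦ Real.cosh u - 1) (by fun_prop)
    measurableSet_Ioi Subset.rfl one_half_pos (fun u _ ↦ half_mul_sq_le_cosh_sub_one u) ht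
  have hgauss : √t * (√(π / (t * (1 / 2))) / 2) ≤ 2 := by
    rw [← mul_div_assoc, ← sqrt_mul ht.le, div_le_iff₀ two_pos]
    refine sqrt_le_iff.2 ⟨by norm_num, ?_⟩
    field_simp
    linarith [pi_le_four]
  rw [scaledK0_eq]
  exact (mul_le_mul_of_nonneg_left hint (sqrt_nonneg t)).trans hgauss

lemma tendsto_scaledK0 : Tendsto scaledK0 atTop (𝓝 √(π / 2)) := by
  have hlim : Tendsto (fun u : ℝ ↦ (Real.cosh u - 1) / u ^ 2) (𝓝[>] 0) (𝓝 (1 / 2)) := by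
    refine (tendsto_sq_div_sq_of_hasDerivAt (by simpa using Real.hasDerivAt_sinh 0)
      Real.sinh_zero).congr fun u ↦ ?_
    have hdouble := Real.cosh_two_mul (u / 2)
    rw [mul_div_cancel₀ u two_ne_zero, Real.cosh_sq] at hdouble
    rw [hdouble]
    ring
  have hlaplace := tendsto_sqrt_mul_setIntegral_exp_neg_mul (by fun_prop) measurableSet_Ioi
    Subset.rfl self_mem_nhdsWithin one_half_pos (fun u _ ↦ half_mul_sq_le_cosh_sub_one u) hlim
  have hconst : √(π / (1 / 2)) / 2 = √(π / 2) := by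
    rw [show π / (1 / 2) = 2 ^ 2 * (π / 2) by ring, sqrt_mul (by norm_num), sqrt_sq two_pos.le]
    ring
  rw [← hconst]
  exact hlaplace.congr fun t ↦ (scaledK0_eq t).symm

lemma K0_le {t : ℝ} (ht : 0 < t) : K0 t ≤ 2 * exp (-t) / √t := by
  have hscaled := scaledK0_le_two ht
  rw [scaledK0, mul_right_comm, ← le_div_iff₀ (exp_pos t), div_eq_mul_inv, ← exp_neg] at hscaled
  rwa [le_div_iff₀' (sqrt_pos.2 ht)]

lemma mul_K1_le_two_mul_K0_half {t : ℝ} (ht : 0 < t) : t * K1 t ≤ 2 * K0 (t / 2) := by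
  rw [K1, K0, ← integral_const_mul, ← integral_const_mul]
  refine setIntegral_mono ?_ ((integrableOn_exp_neg_mul_cosh (half_pos ht)).const_mul 2) fun u ↦ ?_
  · simpa [IntegrableOn] using (integrableOn_cosh_pow_mul_exp 1 ht).const_mul t
  · have hsplit : exp (-(t / 2 * Real.cosh u)) =
        exp (t / 2 * Real.cosh u) * exp (-(t * Real.cosh u)) := by
      rw [← exp_add]
      ring_nf
    dsimp only
    rw [hsplit, ← mul_assoc, ← mul_assoc]
    refine mul_le_mul_of_nonneg_right ?_ (exp_pos _).le
    linarith [add_one_le_exp (t / 2 * Real.cosh u)]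

lemma mul_K1_le {t : ℝ} (ht : 0 < t) : t * K1 t ≤ 6 * exp (-(t / 2)) / √t := by
  have hsqrt2 : √2 ≤ 3 / 2 := sqrt_le_iff.2 (by norm_num)
  calc t * K1 t ≤ 2 * K0 (t / 2) := mul_K1_le_two_mul_K0_half ht
    _ ≤ 2 * (2 * exp (-(t / 2)) / √(t / 2)) := by
        gcongr
        exact K0_le (half_pos ht)
    _ = 4 * √2 * exp (-(t / 2)) / √t := by
        rw [sqrt_div ht.le]
        field_simp
        norm_num
    _ ≤ 6 * exp (-(t / 2)) / √t := by
        gcongr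
        linarith

/-! ### The fourth-power ladder -/

/-- Iterated Euler derivatives of `f * φ ^ 3`, with lower-order terms removed: if `D` is a
derivation with `D f = g`, `D g = x * f`, `D φ = γ`, `D γ = x * φ`, then `D` sends the `k`-th
entry to the `(k + 1)`-st plus `k * (5 - k) * x` times the `(k - 1)`-st. Since the list stops after
the fourth entry, this encodes the fifth-order equation satisfied by `f * φ ^ 3`. -/
def ladder {R : Type*} [CommRing R] (f g φ γ : R) : ℕ → R
  | 0 => f * φ ^ 3
  | 1 => g * φ ^ 3 + 3 * (f * φ ^ 2 * γ)
  | 2 => 6 * (f * φ * γ ^ 2) + 6 * (g * φ ^ 2 * γ)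
  | 3 => 6 * (f * γ ^ 3) + 18 * (g * φ * γ ^ 2)
  | 4 => 24 * (g * γ ^ 3)
  | _ => 0

lemma derivation_ladder {R A : Type*} [CommRing R] [CommRing A] [Algebra R A]
    (D : Derivation R A A) {f g φ γ x : A} (hf : D f = g) (hg : D g = x * f) (hφ : D φ = γ)
    (hγ : D γ = x * φ) {k : ℕ} (hk : k < 5) :
    D (ladder f g φ γ k) =
      ladder f g φ γ (k + 1) + k * (5 - k) * (x * ladder f g φ γ (k - 1)) := by
  have hconst (n : ℕ) [n.AtLeastTwo] : D (OfNat.ofNat n : A) = 0 := D.map_natCast n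
  interval_cases k <;>
  · simp only [ladder, map_add, Derivation.leibniz, Derivation.leibniz_pow, hf, hg, hφ, hγ, hconst,
      smul_eq_mul, nsmul_eq_mul, Nat.reduceSub]
    push_cast
    ring

lemma hasDerivAt_ladder {f g φ γ : ℝ → ℝ} {c x t : ℝ} (hf : HasDerivAt f (c * g t) t)
    (hg : HasDerivAt g (c * (x * f t)) t) (hφ : HasDerivAt φ (c * γ t) t)
    (hγ : HasDerivAt γ (c * (x * φ t)) t) {k : ℕ} (hk : k < 5) :
    HasDerivAt (fun t ↦ ladder (f t) (g t) (φ t) (γ t) k)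
      (c * (ladder (f t) (g t) (φ t) (γ t) (k + 1) +
        k * (5 - k) * (x * ladder (f t) (g t) (φ t) (γ t) (k - 1)))) t := by
  interval_cases k
  · exact (hf.mul (hφ.pow 3)).congr_deriv (by simp [ladder]; ring)
  · exact ((hg.mul (hφ.pow 3)).add (((hf.mul (hφ.pow 2)).mul hγ).const_mul 3)).congr_deriv
      (by simp [ladder]; ring)
  · exact ((((hf.mul hφ).mul (hγ.pow 2)).const_mul 6).add
      (((hg.mul (hφ.pow 2)).mul hγ).const_mul 6)).congr_deriv (by simp [ladder]; ring)
  · exact (((hf.mul (hγ.pow 3)).const_mul 6).add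
      (((hg.mul hφ).mul (hγ.pow 2)).const_mul 18)).congr_deriv (by simp [ladder]; ring)
  · exact ((hg.mul (hγ.pow 3)).const_mul 24).congr_deriv (by simp [ladder]; ring)

lemma abs_ladder_le {f g φ γ A B C : ℝ} (hf : |f| ≤ A) (hg : |g| ≤ C) (hφ : |φ| ≤ B)
    (hγ : |γ| ≤ B) (k : ℕ) : |ladder f g φ γ k| ≤ 24 * ((A + C) * B ^ 3) := by
  have hA : 0 ≤ A := (abs_nonneg f).trans hf
  have hB : 0 ≤ B := (abs_nonneg φ).trans hφ
  have hC : 0 ≤ C := (abs_nonneg g).trans hg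
  have hmonomial {a M p q r : ℝ} (ha : |a| ≤ M) (hp : |p| ≤ B) (hq : |q| ≤ B) (hr : |r| ≤ B) :
      |a * p * q * r| ≤ M * B ^ 3 := by
    have hM : 0 ≤ M := (abs_nonneg a).trans ha
    calc |a * p * q * r| = |a| * |p| * |q| * |r| := by simp only [abs_mul]
      _ ≤ M * B * B * B := by gcongr
      _ = M * B ^ 3 := by ring
  have hAB : 0 ≤ A * B ^ 3 := by positivity
  have hCB : 0 ≤ C * B ^ 3 := by positivity
  rw [abs_le]
  match k with
  | 0 =>
    have hfirst := abs_le.1 (hmonomial hf hφ hφ hφ)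
    constructor <;> simp only [ladder] <;> linarith
  | 1 =>
    have hfirst := abs_le.1 (hmonomial hg hφ hφ hφ)
    have hsecond := abs_le.1 (hmonomial hf hφ hφ hγ)
    constructor <;> simp only [ladder] <;> linarith
  | 2 =>
    have hfirst := abs_le.1 (hmonomial hf hφ hγ hγ)
    have hsecond := abs_le.1 (hmonomial hg hφ hφ hγ)
    constructor <;> simp only [ladder] <;> linarith
  | 3 =>
    have hfirst := abs_le.1 (hmonomial hf hγ hγ hγ)
    have hsecond := abs_le.1 (hmonomial hg hφ hγ hγ)
    constructor <;> simp only [ladder] <;> linarith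
  | 4 =>
    have hfirst := abs_le.1 (hmonomial hg hγ hγ hγ)
    constructor <;> simp only [ladder] <;> linarith
  | _ + 5 => constructor <;> simp only [ladder] <;> linarith

/-- Eliminating the ladder entries `1, …, 4` leaves a three-term recurrence for the entry `0`. -/
lemma ladder_elimination {a b c : ℕ → ℝ} {l : ℝ}
    (ha : ∀ k : ℕ, k < 5 → l * a k = a (k + 1) + k * (5 - k) * b (k - 1))
    (hb : ∀ k : ℕ, k < 5 → (l - 2) * b k = b (k + 1) + k * (5 - k) * c (k - 1))
    (hc : (l - 4) * c 0 = c 1) (ha5 : a 5 = 0) :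
    l ^ 5 * a 0 = 4 * (l - 1) * (5 * l * (l - 2) + 8) * b 0 - 64 * (l - 2) * c 0 := by
  have ha0 := ha 0 (by norm_num)
  have ha1 := ha 1 (by norm_num)
  have ha2 := ha 2 (by norm_num)
  have ha3 := ha 3 (by norm_num)
  have ha4 := ha 4 (by norm_num)
  have hb0 := hb 0 (by norm_num)
  have hb1 := hb 1 (by norm_num)
  have hb2 := hb 2 (by norm_num)
  norm_num at ha0 ha1 ha2 ha3 ha4 hb0 hb1 hb2
  rw [ha5] at ha4
  rw [← hc] at hb2
  linear_combination l ^ 4 * ha0 + l ^ 3 * ha1 + l ^ 2 * ha2 + l * ha3 + ha4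
    - 4 * hb2 - (10 * l - 8) * hb1 - (6 * l ^ 2 + (10 * l - 8) * (l - 2)) * hb0

/-! ### Bessel moments -/

/-- The ladder of `I₀ K₀³`, for the Euler derivative `t d/dt`. -/
noncomputable def besselLadder (k : ℕ) (t : ℝ) : ℝ :=
  ladder (I0 t) (t * I1 t) (K0 t) (-(t * K1 t)) k

lemma hasDerivAt_besselLadder {k : ℕ} (hk : k < 5) {t : ℝ} (ht : 0 < t) :
    HasDerivAt (besselLadder k)
      (t⁻¹ * (besselLadder (k + 1) t + k * (5 - k) * (t ^ 2 * besselLadder (k - 1) t))) t := by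
  refine hasDerivAt_ladder ((hasDerivAt_I0 t).congr_deriv ?_)
    ((hasDerivAt_mul_I1 t).congr_deriv ?_) ((hasDerivAt_K0 ht).congr_deriv ?_)
    ((hasDerivAt_mul_K1 ht).fun_neg.congr_deriv ?_) hk
  all_goals field_simp

lemma continuousOn_besselLadder (k : ℕ) : ContinuousOn (besselLadder k) (Ioi 0) := by
  rcases lt_or_ge k 5 with hk | hk
  · exact fun t ht ↦ (hasDerivAt_besselLadder hk ht).continuousAt.continuousWithinAt
  · obtain ⟨m, rfl⟩ := Nat.exists_eq_add_of_le' hk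
    exact continuousOn_const

lemma besselLadder_zero_nonneg (t : ℝ) : 0 ≤ besselLadder 0 t :=
  mul_nonneg (I0_nonneg t) (pow_nonneg (K0_nonneg t) 3)

lemma exp_mul_cube_eq {t : ℝ} (ht : 0 < t) :
    exp t * (6 * exp (-(t / 2)) / √t) ^ 3 = 216 * (t ^ (-(3 / 2) : ℝ) * exp (-(t / 2))) := by
  have hexp : exp t * exp (-(t / 2)) ^ 3 = exp (-(t / 2)) := by
    rw [← exp_nat_mul, ← exp_add]
    congr 1
    push_cast
    ring
  have hsqrt : (√t)⁻¹ ^ 3 = t ^ (-(3 / 2) : ℝ) := by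
    rw [sqrt_eq_rpow, ← rpow_neg ht.le, ← rpow_natCast, ← rpow_mul ht.le]
    norm_num
  rw [div_eq_mul_inv, mul_pow, mul_pow, hsqrt]
  linear_combination 216 * t ^ (-(3 / 2) : ℝ) * hexp

section Bounds

variable {t : ℝ}

lemma abs_K0_le (ht : 0 < t) : |K0 t| ≤ 6 * exp (-(t / 2)) / √t := by
  rw [abs_of_nonneg (K0_nonneg t)]
  refine (K0_le ht).trans ?_
  gcongr
  · norm_num
  · linarith

lemma abs_neg_mul_K1_le (ht : 0 < t) : |-(t * K1 t)| ≤ 6 * exp (-(t / 2)) / √t := by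
  rw [abs_neg, abs_of_nonneg (mul_nonneg ht.le (K1_nonneg t))]
  exact mul_K1_le ht

lemma abs_mul_I1_le (ht : 0 < t) : |t * I1 t| ≤ t ^ 2 * exp t := by
  rw [abs_of_nonneg (mul_nonneg ht.le (I1_nonneg ht.le)), sq, mul_assoc]
  gcongr
  exact I1_le_mul_exp ht.le

lemma abs_besselLadder_le (ht : 0 < t) (k : ℕ) :
    |besselLadder k t| ≤ 165888 * (t ^ (-(3 / 2) : ℝ) * exp (-(1 / 4) * t)) := by
  have hI0 : |I0 t| ≤ exp t := (abs_of_nonneg (I0_nonneg t)).trans_le (I0_le_exp ht.le)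
  have hquad : 1 + t ^ 2 ≤ 32 * exp (1 / 4 * t) := by
    linarith [quadratic_le_exp_of_nonneg (x := 1 / 4 * t) (by positivity)]
  calc |besselLadder k t| ≤ 24 * ((exp t + t ^ 2 * exp t) * (6 * exp (-(t / 2)) / √t) ^ 3) :=
        abs_ladder_le hI0 (abs_mul_I1_le ht) (abs_K0_le ht) (abs_neg_mul_K1_le ht) k
    _ = 5184 * (1 + t ^ 2) * (t ^ (-(3 / 2) : ℝ) * exp (-(t / 2))) := by
        linear_combination 24 * (1 + t ^ 2) * exp_mul_cube_eq ht
    _ ≤ 5184 * (32 * exp (1 / 4 * t)) * (t ^ (-(3 / 2) : ℝ) * exp (-(t / 2))) := by gcongr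
    _ = 165888 * (t ^ (-(3 / 2) : ℝ) * (exp (1 / 4 * t) * exp (-(t / 2)))) := by ring
    _ = 165888 * (t ^ (-(3 / 2) : ℝ) * exp (-(1 / 4) * t)) := by
        rw [← exp_add]
        ring_nf

/-- The last ladder entry does not involve `I₀`, which gains a factor `t²`. -/
lemma abs_besselLadder_four_le (ht : 0 < t) :
    |besselLadder 4 t| ≤ 5184 * (t ^ (1 / 2 : ℝ) * exp (-(1 / 4) * t)) := by
  have hpow : t ^ 2 * t ^ (-(3 / 2) : ℝ) = t ^ (1 / 2 : ℝ) := by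
    rw [← rpow_natCast t 2, ← rpow_add ht]
    norm_num
  calc |besselLadder 4 t| ≤ 24 * ((0 + t ^ 2 * exp t) * (6 * exp (-(t / 2)) / √t) ^ 3) :=
        abs_ladder_le (f := 0) abs_zero.le (abs_mul_I1_le ht) (abs_K0_le ht)
          (abs_neg_mul_K1_le ht) 4
    _ = 5184 * (t ^ (1 / 2 : ℝ) * exp (-(t / 2))) := by
        rw [← hpow]
        linear_combination 24 * t ^ 2 * exp_mul_cube_eq ht
    _ ≤ 5184 * (t ^ (1 / 2 : ℝ) * exp (-(1 / 4) * t)) := by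
        gcongr
        linarith

lemma abs_besselLadder_mul_pow_le (ht : 0 < t) (k m : ℕ) :
    |besselLadder k t * t ^ m| ≤ 165888 * (t ^ (m - 3 / 2 : ℝ) * exp (-(1 / 4) * t)) := by
  rw [abs_mul, abs_of_pos (pow_pos ht m), sub_eq_neg_add, rpow_add ht, rpow_natCast]
  calc |besselLadder k t| * t ^ m
      ≤ 165888 * (t ^ (-(3 / 2) : ℝ) * exp (-(1 / 4) * t)) * t ^ m := by
        gcongr
        exact abs_besselLadder_le ht k
    _ = 165888 * (t ^ (-(3 / 2) : ℝ) * t ^ m * exp (-(1 / 4) * t)) := by ring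

end Bounds

lemma integrableOn_besselLadder_mul_pow (k : ℕ) {m : ℕ} (hm : 0 < m) :
    IntegrableOn (fun t ↦ besselLadder k t * t ^ m) (Ioi 0) := by
  have hexponent : -1 < (m - 3 / 2 : ℝ) := by
    have : (1 : ℝ) ≤ m := mod_cast hm
    linarith
  have hbound : IntegrableOn (fun t : ℝ ↦ t ^ (m - 3 / 2 : ℝ) * exp (-(1 / 4) * t)) (Ioi 0) := by
    simpa only [rpow_one] using
      integrableOn_rpow_mul_exp_neg_mul_rpow hexponent one_pos (b := 1 / 4) (by norm_num)
  refine (hbound.const_mul 165888).mono'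
    (((continuousOn_besselLadder k).mul (by fun_prop)).aestronglyMeasurable measurableSet_Ioi) ?_
  exact (ae_restrict_iff' measurableSet_Ioi).2
    (.of_forall fun t ht ↦ abs_besselLadder_mul_pow_le ht k m)

lemma integral_deriv_eq_zero_of_abs_le {g g' : ℝ → ℝ} {C a b : ℝ} (ha : 0 < a) (hb : 0 < b)
    (hderiv : ∀ t, 0 < t → HasDerivAt g (g' t) t) (hint : IntegrableOn g' (Ioi 0))
    (hzero : g 0 = 0) (hle : ∀ t, 0 < t → |g t| ≤ C * (t ^ a * exp (-b * t))) :
    ∫ t in Ioi (0 : ℝ), g' t = 0 := by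
  have hcont : ContinuousWithinAt g (Ici 0) 0 := by
    have hbound : ContinuousWithinAt (fun t : ℝ ↦ C * (t ^ a * exp (-b * t))) (Ioi 0) 0 :=
      (((continuous_rpow_const ha.le).mul (by fun_prop)).const_mul C).continuousWithinAt
    rw [ContinuousWithinAt, zero_rpow ha.ne', zero_mul, mul_zero] at hbound
    rw [← continuousWithinAt_Ioi_iff_Ici, ContinuousWithinAt, hzero]
    exact squeeze_zero_norm' (eventually_mem_nhdsWithin.mono hle) hbound
  have htop : Tendsto g atTop (𝓝 0) := by
    refine squeeze_zero_norm' ((eventually_gt_atTop 0).mono hle) ?_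
    simpa using (tendsto_rpow_mul_exp_neg_mul_atTop_nhds_zero a b hb).const_mul C
  rw [integral_Ioi_of_hasDerivAt_of_tendsto hcont hderiv hint htop, hzero, sub_zero]

/-- The odd moments of the Bessel ladder; the `0`-th entry gives the moments of `I₀ K₀³`. -/
noncomputable def besselMoment (k n : ℕ) : ℝ :=
  ∫ t in Ioi (0 : ℝ), besselLadder k t * t ^ (2 * n + 1)

lemma besselMoment_rel (n k : ℕ) (hk : k < 5) :
    -(2 * n + 2) * besselMoment k n =
      besselMoment (k + 1) n + k * (5 - k) * besselMoment (k - 1) (n + 1) := by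
  have hint_k := (integrableOn_besselLadder_mul_pow k (m := 2 * n + 1) (by simp)).const_mul
    (2 * n + 2 : ℝ)
  have hint_succ := integrableOn_besselLadder_mul_pow (k + 1) (m := 2 * n + 1) (by simp)
  have hint_pred := (integrableOn_besselLadder_mul_pow (k - 1)
    (m := 2 * (n + 1) + 1) (by simp)).const_mul (k * (5 - k) : ℝ)
  have hexponent : (0 : ℝ) < (2 * n + 2 : ℕ) - 3 / 2 := by
    push_cast
    linarith [n.cast_nonneg (α := ℝ)]
  have hzero := integral_deriv_eq_zero_of_abs_le (b := 1 / 4) hexponent (by norm_num)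
    (fun t ht ↦ ?_) ((hint_k.add hint_succ).add hint_pred) (by simp)
    (fun t ht ↦ abs_besselLadder_mul_pow_le ht k (2 * n + 2))
  · rw [integral_add' (hint_k.add hint_succ) hint_pred, integral_add' hint_k hint_succ,
      integral_const_mul, integral_const_mul] at hzero
    simp only [besselMoment]
    linarith
  · refine ((hasDerivAt_besselLadder hk ht).mul (hasDerivAt_pow (2 * n + 2) t)).congr_deriv ?_
    simp only [Pi.add_apply, Nat.add_succ_sub_one]
    push_cast
    field_simp
    ring

lemma besselMoment_three_zero : besselMoment 3 0 = 0 := by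
  have hzero := integral_deriv_eq_zero_of_abs_le (by norm_num) (by norm_num)
    (fun t ht ↦ (hasDerivAt_besselLadder (by norm_num : 4 < 5) ht).congr_deriv ?_)
    ((integrableOn_besselLadder_mul_pow 3 one_pos).const_mul 4) (by simp [besselLadder, ladder])
    (fun t ht ↦ abs_besselLadder_four_le ht)
  · rw [integral_const_mul] at hzero
    simpa [besselMoment] using hzero
  · have hlast : besselLadder 5 t = 0 := rfl
    simp only [hlast]
    norm_num
    field_simp

lemma besselMoment_zero_one : besselMoment 0 1 = besselMoment 0 0 / 4 := by
  have hrel0 := besselMoment_rel 0 0 (by norm_num)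
  have hrel1 := besselMoment_rel 0 1 (by norm_num)
  have hrel2 := besselMoment_rel 0 2 (by norm_num)
  have hrel0' := besselMoment_rel 1 0 (by norm_num)
  norm_num [besselMoment_three_zero] at hrel0 hrel1 hrel2 hrel0'
  linarith

lemma besselMoment_rec (n : ℕ) :
    128 * (n + 2) * besselMoment 0 (n + 2) =
      16 * (2 * n + 3) * (5 * (n + 1) * (n + 2) + 2) * besselMoment 0 (n + 1)
        - 32 * (n + 1) ^ 5 * besselMoment 0 n := by
  have hrec := ladder_elimination (a := (besselMoment · n)) (b := (besselMoment · (n + 1)))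
    (c := (besselMoment · (n + 2))) (besselMoment_rel n) (fun k hk ↦ ?_) ?_
    (by simp [besselMoment, besselLadder, ladder])
  · linear_combination -hrec
  · rw [← besselMoment_rel (n + 1) k hk]
    push_cast
    ring
  · have hrel := besselMoment_rel (n + 2) 0 (by norm_num)
    norm_num at hrel
    linear_combination hrel

/-! ### Power series of `I₀` and of its powers -/

section BesselSeries

open PowerSeries

/-- The power series of `I₀` in the variable `t²`. -/
noncomputable def besselSeries : ℝ⟦X⟧ := PowerSeries.mk fun n ↦ 1 / (4 ^ n * (n.factorial : ℝ) ^ 2)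

/-- The derivation `t d/dt` written in the variable `X = t²`. -/
noncomputable def eulerDerivation : Derivation ℝ ℝ⟦X⟧ ℝ⟦X⟧ := (2 * X : ℝ⟦X⟧) • derivative ℝ

lemma coeff_eulerDerivation (f : ℝ⟦X⟧) (n : ℕ) :
    coeff n (eulerDerivation f) = 2 * n * coeff n f := by
  have htwo : (2 : ℝ⟦X⟧) = C (2 : ℝ) := (map_ofNat C 2).symm
  rw [eulerDerivation, Derivation.smul_apply, smul_eq_mul, mul_assoc, htwo, coeff_C_mul]
  cases n with
  | zero => simp
  | succ n =>
    rw [coeff_succ_X_mul, coeff_derivative]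
    push_cast
    ring

lemma eulerDerivation_eulerDerivation_besselSeries :
    eulerDerivation (eulerDerivation besselSeries) = X * besselSeries := by
  ext n
  rw [coeff_eulerDerivation, coeff_eulerDerivation]
  cases n with
  | zero => simp
  | succ n =>
    have := n.factorial_ne_zero
    rw [coeff_succ_X_mul]
    simp only [besselSeries, coeff_mk, Nat.factorial_succ]
    push_cast
    field_simp
    ring

/-- Coefficients of the ladder of `I₀⁴`; the `0`-th entry gives the coefficients of `I₀⁴`. -/
noncomputable def besselCoeff (k n : ℕ) : ℝ :=
  coeff n (ladder besselSeries (eulerDerivation besselSeries) besselSeries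
    (eulerDerivation besselSeries) k)

lemma besselCoeff_zero_left (n : ℕ) : besselCoeff 0 n = coeff n (besselSeries ^ 4) := by
  rw [besselCoeff, ladder, ← pow_succ']

lemma besselCoeff_five (n : ℕ) : besselCoeff 5 n = 0 := map_zero _

lemma besselCoeff_eq_coeff_add (n k : ℕ) (hk : k < 5) :
    2 * n * besselCoeff k n = besselCoeff (k + 1) n + k * (5 - k) *
      coeff n (X * ladder besselSeries (eulerDerivation besselSeries) besselSeries
        (eulerDerivation besselSeries) (k - 1)) := by
  have hconst : (k * (5 - k) : ℝ⟦X⟧) = C (k * (5 - k) : ℝ) := by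
    rw [map_mul, map_sub, map_natCast, map_ofNat]
  rw [besselCoeff, ← coeff_eulerDerivation, derivation_ladder eulerDerivation rfl
    eulerDerivation_eulerDerivation_besselSeries rfl
    eulerDerivation_eulerDerivation_besselSeries hk, map_add, hconst, coeff_C_mul, besselCoeff]

lemma besselCoeff_rel_zero (k : ℕ) (hk : k < 5) : besselCoeff (k + 1) 0 = 0 := by
  simpa using (besselCoeff_eq_coeff_add 0 k hk).symm

lemma besselCoeff_rel_succ (n k : ℕ) (hk : k < 5) :
    2 * (n + 1) * besselCoeff k (n + 1) =
      besselCoeff (k + 1) (n + 1) + k * (5 - k) * besselCoeff (k - 1) n := by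
  have hrel := besselCoeff_eq_coeff_add (n + 1) k hk
  rwa [coeff_succ_X_mul, Nat.cast_succ] at hrel

lemma besselCoeff_zero_rel (n : ℕ) : 2 * n * besselCoeff 0 n = besselCoeff 1 n := by
  simpa using besselCoeff_eq_coeff_add n 0 (by norm_num)

lemma besselCoeff_zero_zero : besselCoeff 0 0 = 1 := by
  simp [besselCoeff_zero_left, besselSeries]

lemma besselCoeff_zero_one : besselCoeff 0 1 = 1 := by
  have hrec := ladder_elimination
    (a := (besselCoeff · 1)) (b := (besselCoeff · 0)) (c := 0) (l := 2)
    (fun k hk ↦ by simpa using besselCoeff_rel_succ 0 k hk)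
    (fun k hk ↦ by simpa using (besselCoeff_rel_zero k hk).symm) (by simp) (besselCoeff_five 1)
  norm_num [besselCoeff_zero_zero] at hrec
  linarith

lemma besselCoeff_rec (n : ℕ) :
    32 * (n + 2) ^ 5 * besselCoeff 0 (n + 2) =
      16 * (2 * n + 3) * (5 * (n + 1) * (n + 2) + 2) * besselCoeff 0 (n + 1)
        - 128 * (n + 1) * besselCoeff 0 n := by
  have hrec := ladder_elimination (a := (besselCoeff · (n + 2))) (b := (besselCoeff · (n + 1)))
    (c := (besselCoeff · n)) (l := 2 * (n + 2)) (fun k hk ↦ ?_) (fun k hk ↦ ?_) ?_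
    (besselCoeff_five _)
  · linear_combination hrec
  · rw [← besselCoeff_rel_succ (n + 1) k hk]
    push_cast
    ring
  · rw [← besselCoeff_rel_succ n k hk]
    ring
  · rw [← besselCoeff_zero_rel]
    ring

/-- The two recurrences are exchanged by the factor `n!⁴ / 4ⁿ`. -/
lemma besselMoment_zero_eq (n : ℕ) :
    besselMoment 0 n = besselMoment 0 0 * ((n.factorial : ℝ) ^ 4 / 4 ^ n * besselCoeff 0 n) := by
  induction n using Nat.twoStepInduction with
  | zero => simp [besselCoeff_zero_zero]
  | one =>
    rw [besselMoment_zero_one, besselCoeff_zero_one]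
    simp
    ring
  | more n ih ih_succ =>
    have hmoment := besselMoment_rec n
    have hcoeff := besselCoeff_rec n
    rw [ih, ih_succ] at hmoment
    refine mul_left_cancel₀ (by positivity : 128 * ((n : ℝ) + 2) ≠ 0) ?_
    rw [hmoment]
    simp only [Nat.factorial_succ, pow_succ (4 : ℝ)]
    push_cast
    field_simp
    linear_combination (-4 * besselMoment 0 0) * hcoeff

lemma hasSum_coeff_mul {f g : ℝ⟦X⟧} {t a b : ℝ} (hf : HasSum (fun n ↦ coeff n f * t ^ n) a)
    (hg : HasSum (fun n ↦ coeff n g * t ^ n) b) :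
    HasSum (fun n ↦ coeff n (f * g) * t ^ n) (a * b) := by
  have hcauchy (n : ℕ) : coeff n (f * g) * t ^ n = ∑ p ∈ Finset.HasAntidiagonal.antidiagonal n,
      coeff p.1 f * t ^ p.1 * (coeff p.2 g * t ^ p.2) := by
    rw [coeff_mul, Finset.sum_mul]
    refine Finset.sum_congr rfl fun p hp ↦ ?_
    rw [← Finset.HasAntidiagonal.mem_antidiagonal.1 hp]
    ring
  have hsum := summable_norm_sum_mul_antidiagonal_of_summable_norm hf.summable.norm hg.summable.norm
  simp only [hcauchy]
  rw [← hf.tsum_eq, ← hg.tsum_eq, tsum_mul_tsum_eq_tsum_sum_antidiagonal_of_summable_norm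
    hf.summable.norm hg.summable.norm]
  exact hsum.of_norm.hasSum

lemma hasSum_coeff_pow {f : ℝ⟦X⟧} {t a : ℝ} (hf : HasSum (fun n ↦ coeff n f * t ^ n) a) (k : ℕ) :
    HasSum (fun n ↦ coeff n (f ^ k) * t ^ n) (a ^ k) := by
  induction k with
  | zero =>
    simpa [coeff_one] using hasSum_single (f := fun n ↦ coeff n (1 : ℝ⟦X⟧) * t ^ n) 0
      fun n hn ↦ by simp [coeff_one, hn]
  | succ k ih => simpa only [pow_succ] using hasSum_coeff_mul ih hf

lemma coeff_pow_nonneg {f : ℝ⟦X⟧} (hf : ∀ n, 0 ≤ coeff n f) (k n : ℕ) : 0 ≤ coeff n (f ^ k) := by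
  rw [coeff_pow]
  exact Finset.sum_nonneg fun _ _ ↦ Finset.prod_nonneg fun _ _ ↦ hf _

lemma coeff_besselSeries_pow_nonneg (k n : ℕ) : 0 ≤ coeff n (besselSeries ^ k) :=
  coeff_pow_nonneg (fun n ↦ by rw [besselSeries, coeff_mk]; positivity) k n

lemma hasSum_I0_pow (k : ℕ) (t : ℝ) :
    HasSum (fun n ↦ coeff n (besselSeries ^ k) * t ^ (2 * n)) (I0 t ^ k) := by
  simp only [pow_mul]
  exact hasSum_coeff_pow (by simpa only [besselSeries, coeff_mk, pow_mul] using hasSum_I0 t) k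

lemma besselCoeff_zero_nonneg (n : ℕ) : 0 ≤ besselCoeff 0 n :=
  (besselCoeff_zero_left n).symm ▸ coeff_besselSeries_pow_nonneg 4 n

lemma coeff_besselSeries_sq (n : ℕ) :
    coeff n (besselSeries ^ 2) = (2 * n).factorial / (4 ^ n * (n.factorial : ℝ) ^ 4) := by
  have hterm : ∀ p ∈ Finset.HasAntidiagonal.antidiagonal n,
      coeff p.1 besselSeries * coeff p.2 besselSeries =
      1 / (4 ^ n * (n.factorial : ℝ) ^ 2) * (n.choose p.1 * n.choose p.2 : ℕ) := by
    rintro ⟨i, j⟩ hij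
    obtain rfl := Finset.HasAntidiagonal.mem_antidiagonal.1 hij
    rw [Nat.choose_symm_add.symm, Nat.cast_mul, Nat.cast_add_choose ℝ]
    simp only [besselSeries, coeff_mk]
    field_simp
    ring
  rw [sq, coeff_mul, Finset.sum_congr rfl hterm, ← Finset.mul_sum, ← Nat.cast_sum,
    ← Nat.add_choose_eq, Nat.cast_add_choose ℝ, two_mul]
  field_simp

end BesselSeries

/-! ### Series for the two sides -/

lemma lintegral_comp_mul_of_hasSum {u : ℕ → ℝ} (hu : ∀ n, 0 ≤ u n) {g w : ℝ → ℝ}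
    (hg : ∀ s, HasSum (fun n ↦ u n * s ^ (2 * n)) (g s)) (hw : ∀ t ∈ Ioi (0 : ℝ), 0 ≤ w t)
    (hint : ∀ n : ℕ, IntegrableOn (fun t ↦ w t * t ^ (2 * n)) (Ioi 0)) (x : ℝ) :
    ∫⁻ t in Ioi 0, ENNReal.ofReal (g (x * t) * w t) =
      ∑' n : ℕ, ENNReal.ofReal (u n * x ^ (2 * n) * ∫ t in Ioi 0, w t * t ^ (2 * n)) := by
  have hnonneg : ∀ t ∈ Ioi (0 : ℝ), ∀ n : ℕ, 0 ≤ u n * x ^ (2 * n) * (w t * t ^ (2 * n)) :=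
    fun t ht n ↦ mul_nonneg (mul_nonneg (hu n) (by rw [pow_mul]; positivity))
      (mul_nonneg (hw t ht) (by rw [pow_mul]; positivity))
  have hexpand : ∀ t ∈ Ioi (0 : ℝ), ENNReal.ofReal (g (x * t) * w t) =
      ∑' n : ℕ, ENNReal.ofReal (u n * x ^ (2 * n) * (w t * t ^ (2 * n))) := fun t ht ↦ by
    have hsum : HasSum (fun n ↦ u n * x ^ (2 * n) * (w t * t ^ (2 * n))) (g (x * t) * w t) :=
      ((hg (x * t)).mul_right (w t)).congr_fun fun n ↦ by ring
    rw [← hsum.tsum_eq, ENNReal.ofReal_tsum_of_nonneg (hnonneg t ht) hsum.summable]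
  rw [setLIntegral_congr_fun measurableSet_Ioi hexpand, lintegral_tsum fun n ↦
    ((hint n).const_mul _).aestronglyMeasurable.aemeasurable.ennreal_ofReal]
  congr with n
  rw [← integral_const_mul, ofReal_integral_eq_lintegral_ofReal ((hint n).const_mul _)]
  exact (ae_restrict_iff' measurableSet_Ioi).2 (.of_forall fun t ht ↦ hnonneg t ht n)

lemma integrableOn_pow_mul_exp_neg_mul (m : ℕ) {r : ℝ} (hr : 0 < r) :
    IntegrableOn (fun t : ℝ ↦ t ^ m * exp (-(r * t))) (Ioi 0) := by
  simpa only [rpow_one, rpow_natCast, neg_mul] using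
    integrableOn_rpow_mul_exp_neg_mul_rpow (s := m) (by linarith [m.cast_nonneg (α := ℝ)])
      one_pos hr

lemma integral_pow_mul_exp_neg_mul (m : ℕ) {r : ℝ} (hr : 0 < r) :
    ∫ t in Ioi (0 : ℝ), t ^ m * exp (-(r * t)) = m.factorial / r ^ (m + 1) := by
  have hgamma := integral_rpow_mul_exp_neg_mul_Ioi (a := m + 1) (by positivity) hr
  simp only [add_sub_cancel_right, rpow_natCast, Gamma_nat_eq_factorial] at hgamma
  rw [hgamma, ← Nat.cast_add_one, rpow_natCast, one_div, inv_pow]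
  ring

/-- The weighted Laplace transform of `I₀(xt)⁴` at `4`. It is `ℝ≥0∞`-valued since for `a > 0` it
diverges as `x → 1`. For `a = 0` it is the Watson integral. -/
noncomputable def laplaceI0Pow (a : ℕ) (x : ℝ) : ENNReal :=
  ∫⁻ t in Ioi (0 : ℝ), ENNReal.ofReal (I0 (x * t) ^ 4 * (t ^ a * exp (-(4 * t))))

/-- The moments of `I₀(xt)² I₀(t) K₀(t)³`, in `ℝ≥0∞` since for `b > 0` they diverge as `x → 1`. -/
noncomputable def productMoment (b : ℕ) (x : ℝ) : ENNReal :=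
  ∫⁻ t in Ioi (0 : ℝ), ENNReal.ofReal (I0 (x * t) ^ 2 * (besselLadder 0 t * t ^ (2 * b + 1)))

/-- The terms of the power series in `x` of the Watson integral, up to a factor `4`. -/
noncomputable def watsonTerm (x : ℝ) (n : ℕ) : ℝ :=
  (2 * n).factorial * besselCoeff 0 n * x ^ (2 * n) / 16 ^ n

lemma watsonTerm_nonneg (x : ℝ) (n : ℕ) : 0 ≤ watsonTerm x n := by
  have hcoeff := besselCoeff_zero_nonneg n
  rw [watsonTerm, pow_mul]
  positivity

lemma laplaceI0Pow_eq_tsum (a : ℕ) (x : ℝ) :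
    laplaceI0Pow a x = ∑' n : ℕ,
      ENNReal.ofReal (watsonTerm x n * (2 * n + 1).ascFactorial a / 4 ^ (a + 1)) := by
  have hweight (n : ℕ) (t : ℝ) :
      t ^ a * exp (-(4 * t)) * t ^ (2 * n) = t ^ (2 * n + a) * exp (-(4 * t)) := by ring
  rw [laplaceI0Pow, lintegral_comp_mul_of_hasSum (coeff_besselSeries_pow_nonneg 4)
    (hasSum_I0_pow 4) (fun t ht ↦ mul_nonneg (pow_nonneg (le_of_lt ht) a) (exp_pos _).le) fun n ↦ by
      simpa only [hweight] using integrableOn_pow_mul_exp_neg_mul (2 * n + a) four_pos]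
  congr with n
  simp only [hweight, integral_pow_mul_exp_neg_mul _ four_pos]
  rw [← Nat.factorial_mul_ascFactorial, ← besselCoeff_zero_left, watsonTerm,
    show (16 : ℝ) = 4 ^ 2 by norm_num, ← pow_mul]
  congr 1
  push_cast
  field_simp
  ring

lemma productMoment_eq_tsum (b : ℕ) (x : ℝ) :
    productMoment b x = ∑' n : ℕ, ENNReal.ofReal
      ((2 * n).factorial / (4 ^ n * (n.factorial : ℝ) ^ 4) * x ^ (2 * n) *
        besselMoment 0 (n + b)) := by
  have hweight (n : ℕ) (t : ℝ) : besselLadder 0 t * t ^ (2 * b + 1) * t ^ (2 * n) =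
      besselLadder 0 t * t ^ (2 * (n + b) + 1) := by ring
  rw [productMoment, lintegral_comp_mul_of_hasSum (coeff_besselSeries_pow_nonneg 2)
    (hasSum_I0_pow 2)
    (fun t ht ↦ mul_nonneg (besselLadder_zero_nonneg t) (pow_nonneg (le_of_lt ht) _)) fun n ↦ by
      simpa only [hweight] using integrableOn_besselLadder_mul_pow 0 (by simp)]
  simp only [hweight, coeff_besselSeries_sq, besselMoment]

lemma besselMoment_zero_zero_nonneg : 0 ≤ besselMoment 0 0 :=
  setIntegral_nonneg measurableSet_Ioi fun t ht ↦
    mul_nonneg (besselLadder_zero_nonneg t) (pow_nonneg (le_of_lt ht) _)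

lemma productMoment_zero_eq (x : ℝ) :
    productMoment 0 x = ENNReal.ofReal (4 * besselMoment 0 0) * laplaceI0Pow 0 x := by
  have hmoment := besselMoment_zero_zero_nonneg
  rw [productMoment_eq_tsum, laplaceI0Pow_eq_tsum, ← ENNReal.tsum_mul_left]
  congr with n
  rw [← ENNReal.ofReal_mul (by positivity), add_zero, besselMoment_zero_eq, watsonTerm,
    Nat.ascFactorial_zero, show (16 : ℝ) = 4 * 4 by norm_num, mul_pow]
  congr 1
  field_simp
  push_cast
  ring

lemma sq_mul_productMoment_one_eq_tsum (x : ℝ) :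
    ENNReal.ofReal (x ^ 2) * productMoment 1 x = ∑' n : ℕ, ENNReal.ofReal
      (2 * besselMoment 0 0 * (watsonTerm x (n + 1) * ((n + 1) ^ 3 / (2 * n + 1)))) := by
  rw [productMoment_eq_tsum, ← ENNReal.tsum_mul_left]
  congr with n
  rw [← ENNReal.ofReal_mul (by positivity), besselMoment_zero_eq, watsonTerm, mul_add_one,
    Nat.factorial_succ n, Nat.factorial_succ (2 * n + 1), Nat.factorial_succ (2 * n),
    show (16 : ℝ) = 4 * 4 by norm_num, mul_pow]
  congr 1
  push_cast
  field_simp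
  ring

section Comparison

variable (n : ℕ)

lemma succ_cube_div_le :
    ((n : ℝ) + 1) ^ 3 / (2 * n + 1) ≤ (2 * (n + 1) + 1) * (2 * (n + 1) + 2) / 8 := by
  rw [div_le_div_iff₀ (by positivity) (by positivity), ← sub_nonneg]
  ring_nf
  positivity

lemma le_succ_cube_div_add :
    (2 * ((n : ℝ) + 1) + 1) * (2 * (n + 1) + 2) / 8 ≤
      (n + 1) ^ 3 / (2 * n + 1) + (2 * (n + 1) + 1) / 4 := by
  rw [div_add_div _ _ (by positivity) (by positivity),
    div_le_div_iff₀ (by positivity) (by positivity)]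
  have hn : (0 : ℝ) ≤ n := n.cast_nonneg
  nlinarith [mul_nonneg hn hn]

end Comparison

/-- Termwise, the terms of the two series differ by the relative factor `1 + O(1/n)`. -/
lemma sq_mul_productMoment_one_le (x : ℝ) :
    ENNReal.ofReal (x ^ 2) * productMoment 1 x ≤
      ENNReal.ofReal (16 * besselMoment 0 0) * laplaceI0Pow 2 x := by
  have hmoment := besselMoment_zero_zero_nonneg
  rw [sq_mul_productMoment_one_eq_tsum, laplaceI0Pow_eq_tsum, ← ENNReal.tsum_mul_left]
  refine (ENNReal.tsum_le_tsum fun n ↦ ?_).trans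
    (ENNReal.tsum_comp_le_tsum_of_injective (add_left_injective 1) _)
  have hterm := watsonTerm_nonneg x (n + 1)
  rw [← ENNReal.ofReal_mul (by positivity)]
  refine ENNReal.ofReal_le_ofReal ?_
  calc 2 * besselMoment 0 0 * (watsonTerm x (n + 1) * ((n + 1) ^ 3 / (2 * n + 1)))
      ≤ 2 * besselMoment 0 0 *
          (watsonTerm x (n + 1) * ((2 * (n + 1) + 1) * (2 * (n + 1) + 2) / 8)) := by
        exact mul_le_mul_of_nonneg_left (mul_le_mul_of_nonneg_left (succ_cube_div_le n) hterm)
          (by positivity)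
    _ = _ := by
        simp only [Nat.ascFactorial]
        push_cast
        ring

lemma mul_laplaceI0Pow_two_le (x : ℝ) :
    ENNReal.ofReal (16 * besselMoment 0 0) * laplaceI0Pow 2 x ≤
      ENNReal.ofReal (x ^ 2) * productMoment 1 x +
        ENNReal.ofReal (8 * besselMoment 0 0) * laplaceI0Pow 1 x := by
  have hmoment := besselMoment_zero_zero_nonneg
  rw [sq_mul_productMoment_one_eq_tsum, laplaceI0Pow_eq_tsum, laplaceI0Pow_eq_tsum,
    ← ENNReal.tsum_mul_left, ← ENNReal.tsum_mul_left, tsum_eq_zero_add' ENNReal.summable,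
    tsum_eq_zero_add' (f := fun n ↦ ENNReal.ofReal (8 * besselMoment 0 0) * _) ENNReal.summable,
    add_left_comm, ← ENNReal.tsum_add]
  refine add_le_add (le_of_eq ?_) (ENNReal.tsum_le_tsum fun n ↦ ?_)
  · rw [← ENNReal.ofReal_mul (by positivity), ← ENNReal.ofReal_mul (by positivity)]
    simp only [Nat.ascFactorial]
    push_cast
    ring_nf
  have hterm := watsonTerm_nonneg x (n + 1)
  rw [← ENNReal.ofReal_mul (by positivity), ← ENNReal.ofReal_mul (by positivity),
    ← ENNReal.ofReal_add (by positivity) (by positivity)]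
  refine ENNReal.ofReal_le_ofReal ?_
  calc _ = 2 * besselMoment 0 0 *
          (watsonTerm x (n + 1) * ((2 * (n + 1) + 1) * (2 * (n + 1) + 2) / 8)) := by
        simp only [Nat.ascFactorial]
        push_cast
        ring
    _ ≤ 2 * besselMoment 0 0 *
          (watsonTerm x (n + 1) * ((n + 1) ^ 3 / (2 * n + 1) + (2 * (n + 1) + 1) / 4)) := by
        gcongr
        exact le_succ_cube_div_add n
    _ = _ := by
        simp only [Nat.ascFactorial]
        push_cast
        ring

/-! ### The first moment of `I₀K₀³` from the Abelian limit `x → 1` -/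

lemma setLIntegral_Ioi_eq_comp_mul_left (g : ℝ → ENNReal) {c : ℝ} (hc : 0 < c) :
    ∫⁻ s in Ioi 0, g s = ENNReal.ofReal c * ∫⁻ t in Ioi 0, g (c * t) := by
  have hderiv : ∀ t ∈ Ioi (0 : ℝ), HasDerivWithinAt (c * ·) c (Ioi 0) t := fun t _ ↦ by
    simpa using ((hasDerivAt_id t).const_mul c).hasDerivWithinAt
  have hchange := lintegral_image_eq_lintegral_abs_deriv_mul measurableSet_Ioi hderiv
    (mul_right_injective₀ hc.ne').injOn g
  rwa [image_mul_left_Ioi hc, mul_zero, abs_of_pos hc,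
    lintegral_const_mul' _ _ ENNReal.ofReal_ne_top] at hchange

lemma lintegral_const_mul_exp_neg_mul {L r : ℝ} (hL : 0 ≤ L) (hr : 0 < r) :
    ∫⁻ s in Ioi (0 : ℝ), ENNReal.ofReal (L * exp (-(r * s))) = ENNReal.ofReal (L / r) := by
  have hint : IntegrableOn (fun s ↦ L * exp (-(r * s))) (Ioi 0) := by
    simpa [IntegrableOn] using (integrableOn_pow_mul_exp_neg_mul 0 hr).const_mul L
  have hvalue : ∫ s in Ioi (0 : ℝ), exp (-(r * s)) = 1 / r := by
    simpa using integral_pow_mul_exp_neg_mul 0 hr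
  rw [← ofReal_integral_eq_lintegral_ofReal hint (.of_forall fun s ↦ by positivity),
    integral_const_mul, hvalue, mul_one_div]

section Abelian

variable {ι : Type*} {l : Filter ι} [l.IsCountablyGenerated] {ε : ι → ℝ} {Φ : ι → ℝ → ℝ}
  {C L p : ℝ}

lemma tendsto_lintegral_comp_div_mul_exp_neg (hC : 0 ≤ C) (hL : 0 ≤ L) (hp : 0 < p)
    (hε : ∀ᶠ x in l, 0 < ε x) (hbound : ∀ᶠ x in l, ∀ t, 0 < t → Φ x t ≤ C)
    (hcont : ∀ᶠ x in l, ContinuousOn (Φ x) (Ioi 0))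
    (hlim : ∀ s, 0 < s → Tendsto (fun x ↦ Φ x (s / ε x)) l (𝓝 L)) :
    Tendsto (fun x ↦ ∫⁻ s in Ioi 0, ENNReal.ofReal (Φ x (s / ε x) * exp (-(p * s)))) l
      (𝓝 (ENNReal.ofReal (L / p))) := by
  rw [← lintegral_const_mul_exp_neg_mul hL hp]
  refine tendsto_lintegral_filter_of_dominated_convergence'
    (fun s ↦ ENNReal.ofReal (C * exp (-(p * s)))) ?_ ?_
    (by rw [lintegral_const_mul_exp_neg_mul hC hp]; exact ENNReal.ofReal_ne_top) ?_
  · filter_upwards [hε, hcont] with x hεx hcontx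
    refine (ContinuousOn.aemeasurable ?_ measurableSet_Ioi).ennreal_ofReal
    exact (hcontx.comp (by fun_prop) fun s hs ↦ div_pos hs hεx).mul (by fun_prop)
  · filter_upwards [hε, hbound] with x hεx hboundx
    refine (ae_restrict_iff' measurableSet_Ioi).2 (.of_forall fun s hs ↦ ?_)
    gcongr
    exact hboundx _ (div_pos hs hεx)
  · refine (ae_restrict_iff' measurableSet_Ioi).2 (.of_forall fun s hs ↦ ?_)
    exact ENNReal.tendsto_ofReal ((hlim s hs).mul_const _)

/-- The substitution `s = ε t` moves the limit `L` of `Φ` under the integral. -/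
lemma tendsto_mul_lintegral_of_eq_mul_exp_neg {F : ι → ℝ → ℝ} (hC : 0 ≤ C) (hL : 0 ≤ L)
    (hp : 0 < p) (hε : ∀ᶠ x in l, 0 < ε x)
    (hF : ∀ᶠ x in l, ∀ t, 0 < t → F x t = Φ x t * exp (-(p * (ε x * t))))
    (hbound : ∀ᶠ x in l, ∀ t, 0 < t → Φ x t ≤ C)
    (hcont : ∀ᶠ x in l, ContinuousOn (Φ x) (Ioi 0))
    (hlim : ∀ s, 0 < s → Tendsto (fun x ↦ Φ x (s / ε x)) l (𝓝 L)) :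
    Tendsto (fun x ↦ ENNReal.ofReal (ε x) * ∫⁻ t in Ioi 0, ENNReal.ofReal (F x t)) l
      (𝓝 (ENNReal.ofReal (L / p))) := by
  refine (tendsto_lintegral_comp_div_mul_exp_neg hC hL hp hε hbound hcont hlim).congr' ?_
  filter_upwards [hε, hF] with x hεx hFx
  rw [setLIntegral_Ioi_eq_comp_mul_left _ hεx]
  congr 1
  refine setLIntegral_congr_fun measurableSet_Ioi fun t ht ↦ ?_
  rw [hFx t ht, mul_div_cancel_left₀ _ hεx.ne']

end Abelian

lemma exp_neg_mul_I0_nonneg (t : ℝ) : 0 ≤ exp (-t) * I0 t :=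
  mul_nonneg (exp_pos _).le (I0_nonneg t)

lemma exp_neg_mul_I0_le_one {t : ℝ} (ht : 0 ≤ t) : exp (-t) * I0 t ≤ 1 := by
  rw [exp_neg, inv_mul_le_one₀ (exp_pos t)]
  exact I0_le_exp ht

lemma tendsto_exp_neg_mul_I0 : Tendsto (fun t ↦ exp (-t) * I0 t) atTop (𝓝 0) := by
  have hlim := tendsto_scaledI0.mul (tendsto_inv_atTop_zero.comp tendsto_sqrt_atTop)
  rw [mul_zero] at hlim
  refine hlim.congr' ?_
  filter_upwards [eventually_gt_atTop 0] with t ht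
  have : 0 < √t := sqrt_pos.2 ht
  simp only [Function.comp_apply, scaledI0]
  field_simp

section LeftLimit

lemma tendsto_id_nhdsLT_one : Tendsto (fun x : ℝ ↦ x) (𝓝[<] 1) (𝓝 1) := nhdsWithin_le_nhds

lemma eventually_half_lt_nhdsLT_one : ∀ᶠ x : ℝ in 𝓝[<] 1, 1 / 2 < x :=
  tendsto_id_nhdsLT_one.eventually_const_lt (by norm_num)

lemma eventually_one_sub_pos_nhdsLT : ∀ᶠ x : ℝ in 𝓝[<] 1, 0 < 1 - x := by
  filter_upwards [self_mem_nhdsWithin] with x hx using sub_pos.2 hx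

lemma tendsto_inv_pow_nhdsLT_one (k : ℕ) :
    Tendsto (fun x : ℝ ↦ x⁻¹ ^ k) (𝓝[<] 1) (𝓝 1) := by
  simpa using (tendsto_id_nhdsLT_one.inv₀ one_ne_zero).pow k

variable {s : ℝ}

lemma tendsto_div_one_sub_nhdsLT (hs : 0 < s) :
    Tendsto (fun x : ℝ ↦ s / (1 - x)) (𝓝[<] 1) atTop := by
  have hsub : Tendsto (fun x : ℝ ↦ 1 - x) (𝓝[<] 1) (𝓝[>] 0) :=
    tendsto_nhdsWithin_iff.2
      ⟨by simpa using tendsto_id_nhdsLT_one.const_sub 1, eventually_one_sub_pos_nhdsLT⟩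
  exact (tendsto_inv_nhdsGT_zero.comp hsub).const_mul_atTop hs

lemma tendsto_mul_div_one_sub_nhdsLT (hs : 0 < s) :
    Tendsto (fun x : ℝ ↦ x * (s / (1 - x))) (𝓝[<] 1) atTop :=
  tendsto_id_nhdsLT_one.pos_mul_atTop one_pos (tendsto_div_one_sub_nhdsLT hs)

end LeftLimit

lemma sqrt_pow_four {t : ℝ} (ht : 0 ≤ t) : √t ^ 4 = t ^ 2 := by
  rw [show 4 = 2 * 2 from rfl, pow_mul, sq_sqrt ht]

lemma inv_le_two {x : ℝ} (hx : 1 / 2 < x) : x⁻¹ ≤ 2 := by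
  simpa using inv_anti₀ (by norm_num) hx.le

lemma tendsto_one_sub_mul_laplaceI0Pow_two :
    Tendsto (fun x ↦ ENNReal.ofReal (1 - x) * laplaceI0Pow 2 x) (𝓝[<] 1)
      (𝓝 (ENNReal.ofReal (1 / (16 * π ^ 2)))) := by
  have hvalue : 1 / (16 * π ^ 2) = 1 * (√(π / 2) / π) ^ 4 / 4 := by
    rw [div_pow, sqrt_pow_four (by positivity)]
    field_simp
    norm_num
  rw [hvalue]
  refine tendsto_mul_lintegral_of_eq_mul_exp_neg
    (Φ := fun x t ↦ x⁻¹ ^ 2 * scaledI0 (x * t) ^ 4) (C := 2 ^ 2 * 1 ^ 4)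
    (by norm_num) (by positivity) four_pos eventually_one_sub_pos_nhdsLT ?_ ?_
    (.of_forall fun x ↦ by have := continuous_scaledI0; fun_prop)
    fun s hs ↦ (tendsto_inv_pow_nhdsLT_one 2).mul
      ((tendsto_scaledI0.comp (tendsto_mul_div_one_sub_nhdsLT hs)).pow 4)
  · filter_upwards [eventually_half_lt_nhdsLT_one] with x hx t ht
    have : 0 < x := by linarith
    rw [scaledI0, mul_pow, mul_pow, sqrt_pow_four (by positivity), ← exp_nat_mul,
      show -(4 * t) = (4 : ℕ) * -(x * t) + -(4 * ((1 - x) * t)) by push_cast; ring, exp_add]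
    field_simp
  · filter_upwards [eventually_half_lt_nhdsLT_one] with x hx t ht
    have : 0 < x := by linarith
    gcongr
    exacts [inv_le_two hx, scaledI0_nonneg _, scaledI0_le_one (by positivity)]

lemma tendsto_one_sub_mul_laplaceI0Pow_one :
    Tendsto (fun x ↦ ENNReal.ofReal (1 - x) * laplaceI0Pow 1 x) (𝓝[<] 1) (𝓝 0) := by
  have hvalue : (0 : ENNReal) = ENNReal.ofReal (1 * (√(π / 2) / π) ^ 2 * 0 ^ 2 / 4) := by simp
  rw [hvalue]
  refine tendsto_mul_lintegral_of_eq_mul_exp_neg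
    (Φ := fun x t ↦ x⁻¹ ^ 1 * scaledI0 (x * t) ^ 2 * (exp (-(x * t)) * I0 (x * t)) ^ 2)
    (C := 2 ^ 1 * 1 ^ 2 * 1 ^ 2)
    (by norm_num) (by simp) four_pos eventually_one_sub_pos_nhdsLT ?_ ?_
    (.of_forall fun x ↦ by have := continuous_scaledI0; have := continuous_I0; fun_prop)
    fun s hs ↦ ((tendsto_inv_pow_nhdsLT_one 1).mul
      ((tendsto_scaledI0.comp (tendsto_mul_div_one_sub_nhdsLT hs)).pow 2)).mul
      ((tendsto_exp_neg_mul_I0.comp (tendsto_mul_div_one_sub_nhdsLT hs)).pow 2)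
  · filter_upwards [eventually_half_lt_nhdsLT_one] with x hx t ht
    have : 0 < x := by linarith
    have hexp : exp (-(4 * t)) = exp (-(x * t)) ^ 4 * exp (-(4 * ((1 - x) * t))) := by
      rw [← exp_nat_mul, ← exp_add]
      congr 1
      push_cast
      ring
    rw [scaledI0, mul_pow, mul_pow, sq_sqrt (by positivity), hexp]
    field_simp
  · filter_upwards [eventually_half_lt_nhdsLT_one] with x hx t ht
    have : 0 < x := by linarith
    gcongr
    exacts [inv_le_two hx, scaledI0_nonneg _, scaledI0_le_one (by positivity),
      exp_neg_mul_I0_nonneg _, exp_neg_mul_I0_le_one (by positivity)]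

lemma productMoment_one_integrand_eq {x t : ℝ} (hx : 0 < x) (ht : 0 < t) :
    I0 (x * t) ^ 2 * (besselLadder 0 t * t ^ (2 * 1 + 1)) =
      x⁻¹ ^ 1 * scaledI0 (x * t) ^ 2 * (scaledI0 t * scaledK0 t ^ 3) *
        exp (-(2 * ((1 - x) * t))) := by
  have hexp : exp (-(x * t)) ^ 2 * exp (-t) * exp t ^ 3 * exp (-(2 * ((1 - x) * t))) = 1 := by
    simp only [← exp_nat_mul, ← exp_add, exp_eq_one_iff]
    push_cast
    ring
  calc I0 (x * t) ^ 2 * (I0 t * K0 t ^ 3 * t ^ (2 * 1 + 1))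
      = x⁻¹ * (x * t) * t ^ 2 * 1 * (I0 (x * t) ^ 2 * (I0 t * K0 t ^ 3)) := by
        field_simp
        ring
    _ = x⁻¹ * √(x * t) ^ 2 * √t ^ 4 *
          (exp (-(x * t)) ^ 2 * exp (-t) * exp t ^ 3 * exp (-(2 * ((1 - x) * t)))) *
          (I0 (x * t) ^ 2 * (I0 t * K0 t ^ 3)) := by
        rw [hexp, sqrt_pow_four ht.le, sq_sqrt (by positivity)]
    _ = _ := by
        simp only [scaledI0, scaledK0]
        ring

lemma tendsto_one_sub_mul_productMoment_one :
    Tendsto (fun x ↦ ENNReal.ofReal (1 - x) * productMoment 1 x) (𝓝[<] 1)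
      (𝓝 (ENNReal.ofReal (1 / 16))) := by
  have hvalue : 1 / 16 =
      1 * (√(π / 2) / π) ^ 2 * (√(π / 2) / π * √(π / 2) ^ 3) / 2 := by
    rw [show 1 * (√(π / 2) / π) ^ 2 * (√(π / 2) / π * √(π / 2) ^ 3) / 2 =
      (√(π / 2) ^ 2) ^ 3 / (2 * π ^ 3) by field_simp, sq_sqrt (by positivity)]
    field_simp
    norm_num
  rw [hvalue]
  refine tendsto_mul_lintegral_of_eq_mul_exp_neg
    (Φ := fun x t ↦ x⁻¹ ^ 1 * scaledI0 (x * t) ^ 2 * (scaledI0 t * scaledK0 t ^ 3))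
    (C := 2 ^ 1 * 1 ^ 2 * (1 * 2 ^ 3))
    (by norm_num) (by positivity) two_pos eventually_one_sub_pos_nhdsLT ?_ ?_
    (.of_forall fun x ↦ by
      have := continuous_scaledI0
      have := continuousOn_scaledK0
      fun_prop)
    fun s hs ↦ ((tendsto_inv_pow_nhdsLT_one 1).mul
      ((tendsto_scaledI0.comp (tendsto_mul_div_one_sub_nhdsLT hs)).pow 2)).mul
      ((tendsto_scaledI0.comp (tendsto_div_one_sub_nhdsLT hs)).mul
        ((tendsto_scaledK0.comp (tendsto_div_one_sub_nhdsLT hs)).pow 3))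
  · filter_upwards [eventually_half_lt_nhdsLT_one] with x hx t ht
    exact productMoment_one_integrand_eq (by linarith) ht
  · filter_upwards [eventually_half_lt_nhdsLT_one] with x hx t ht
    have : 0 < x := by linarith
    have hI0 := scaledI0_nonneg t
    have hK0 := scaledK0_nonneg t
    gcongr
    exacts [inv_le_two hx, scaledI0_nonneg _, scaledI0_le_one (by positivity),
      scaledI0_le_one ht, scaledK0_le_two ht]

/-- Multiply the two comparisons by `1 - x` and let `x → 1`. -/
lemma besselMoment_zero_zero : besselMoment 0 0 = π ^ 2 / 16 := by
  have hmoment := besselMoment_zero_zero_nonneg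
  have hsq : Tendsto (fun x : ℝ ↦ ENNReal.ofReal (x ^ 2)) (𝓝[<] 1) (𝓝 1) := by
    simpa using ENNReal.tendsto_ofReal (tendsto_id_nhdsLT_one.pow 2)
  have hproduct := ENNReal.Tendsto.mul hsq (.inl one_ne_zero)
    tendsto_one_sub_mul_productMoment_one (.inr ENNReal.one_ne_top)
  have hmain := ENNReal.Tendsto.const_mul (a := ENNReal.ofReal (16 * besselMoment 0 0))
    tendsto_one_sub_mul_laplaceI0Pow_two (.inr ENNReal.ofReal_ne_top)
  have herror := ENNReal.Tendsto.const_mul (a := ENNReal.ofReal (8 * besselMoment 0 0))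
    tendsto_one_sub_mul_laplaceI0Pow_one (.inr ENNReal.ofReal_ne_top)
  have hle := le_of_tendsto_of_tendsto' hproduct hmain fun x ↦ by
    simp only [mul_left_comm _ (ENNReal.ofReal (1 - x))]
    exact mul_le_mul_right (sq_mul_productMoment_one_le x) _
  have hge := le_of_tendsto_of_tendsto' hmain (hproduct.add herror) fun x ↦ by
    simp only [mul_left_comm _ (ENNReal.ofReal (1 - x)), ← mul_add]
    exact mul_le_mul_right (mul_laplaceI0Pow_two_le x) _
  rw [mul_zero, add_zero] at hge
  have heq := hle.antisymm hge
  rw [one_mul, ← ENNReal.ofReal_mul (by positivity),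
    ENNReal.ofReal_eq_ofReal_iff (by positivity) (by positivity)] at heq
  field_simp at heq
  linarith

/-! ### The lattice integral -/

lemma exp_neg_mul_I0_pow_four_le {t : ℝ} (ht : 0 < t) :
    (exp (-t) * I0 t) ^ 4 ≤ 2 * (1 + t ^ 2)⁻¹ := by
  have hone := pow_le_one₀ (n := 4) (exp_neg_mul_I0_nonneg t) (exp_neg_mul_I0_le_one ht.le)
  have hdecay := pow_le_one₀ (n := 4) (scaledI0_nonneg t) (scaledI0_le_one ht)
  rw [scaledI0, mul_assoc, mul_pow, sqrt_pow_four ht.le] at hdecay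
  rw [← div_eq_mul_inv, le_div_iff₀ (by positivity)]
  linarith

lemma laplaceI0Pow_zero_one_ne_top : laplaceI0Pow 0 1 ≠ ⊤ := by
  have hint : Integrable (fun t : ℝ ↦ 2 * (1 + t ^ 2)⁻¹) := integrable_inv_one_add_sq.const_mul 2
  refine ne_top_of_le_ne_top hint.integrableOn.lintegral_lt_top.ne
    (setLIntegral_mono' measurableSet_Ioi fun t ht ↦ ENNReal.ofReal_le_ofReal ?_)
  have hintegrand : I0 (1 * t) ^ 4 * (t ^ 0 * exp (-(4 * t))) = (exp (-t) * I0 t) ^ 4 := by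
    rw [mul_pow, ← exp_nat_mul, one_mul, pow_zero, one_mul, mul_comm]
    push_cast
    ring_nf
  exact hintegrand ▸ exp_neg_mul_I0_pow_four_le ht

lemma laplaceI0Pow_zero_ne_top {x : ℝ} (hx : x ∈ Icc 0 1) : laplaceI0Pow 0 x ≠ ⊤ := by
  refine ne_top_of_le_ne_top laplaceI0Pow_zero_one_ne_top ?_
  obtain ⟨hx0, hx1⟩ := hx
  rw [laplaceI0Pow_eq_tsum, laplaceI0Pow_eq_tsum]
  refine ENNReal.tsum_le_tsum fun n ↦ ENNReal.ofReal_le_ofReal ?_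
  have hcoeff := besselCoeff_zero_nonneg n
  unfold watsonTerm
  gcongr

lemma integral_product_eq_mul_toReal_laplaceI0Pow (x : ℝ) :
    ∫ t in Ioi (0 : ℝ), I0 (x * t) ^ 2 * I0 t * K0 t ^ 3 * t =
      4 * besselMoment 0 0 * (laplaceI0Pow 0 x).toReal := by
  have hmoment := besselMoment_zero_zero_nonneg
  have hI0 := continuous_I0
  have hK0 := continuousOn_K0
  have hproduct : ∫⁻ t in Ioi (0 : ℝ), ENNReal.ofReal (I0 (x * t) ^ 2 * I0 t * K0 t ^ 3 * t) =
      productMoment 0 x := by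
    simp only [productMoment, besselLadder, ladder, mul_zero, zero_add, pow_one, mul_assoc]
  rw [integral_eq_lintegral_of_nonneg_ae, hproduct, productMoment_zero_eq, ENNReal.toReal_mul,
    ENNReal.toReal_ofReal (by positivity)]
  · refine (ae_restrict_iff' measurableSet_Ioi).2 (.of_forall fun t (ht : 0 < t) ↦ ?_)
    have := I0_nonneg t
    have := K0_nonneg t
    positivity
  · exact ContinuousOn.aestronglyMeasurable (by fun_prop) measurableSet_Ioi

section Product

variable {α : Type*} [MeasurableSpace α] {μ : Measure α} [SFinite μ]

lemma integral_prod_four {E : Type*} [NormedAddCommGroup E] [NormedSpace ℝ E]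
    {f : α × α × α × α → E} (hf : Integrable f (μ.prod (μ.prod (μ.prod μ)))) :
    ∫ z, f z ∂μ.prod (μ.prod (μ.prod μ)) =
      ∫ a, ∫ b, ∫ c, ∫ d, f (a, b, c, d) ∂μ ∂μ ∂μ ∂μ := by
  rw [integral_prod _ hf]
  refine integral_congr_ae ?_
  filter_upwards [hf.prod_right_ae] with a ha
  rw [integral_prod _ ha]
  refine integral_congr_ae ?_
  filter_upwards [ha.prod_right_ae] with b hb
  rw [integral_prod _ hb]

lemma lintegral_prod_four_mul {g : α → ENNReal} (hg : Measurable g) :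
    ∫⁻ z, g z.1 * (g z.2.1 * (g z.2.2.1 * g z.2.2.2)) ∂μ.prod (μ.prod (μ.prod μ)) =
      (∫⁻ a, g a ∂μ) ^ 4 := by
  rw [lintegral_prod_mul (g := fun z : α × α × α ↦ g z.1 * (g z.2.1 * g z.2.2))
      hg.aemeasurable (by fun_prop),
    lintegral_prod_mul (g := fun z : α × α ↦ g z.1 * g z.2) hg.aemeasurable (by fun_prop),
    lintegral_prod_mul hg.aemeasurable hg.aemeasurable]
  ring

end Product

/-- Lebesgue measure on the angles `(0, π]`. -/
noncomputable abbrev angleMeasure : Measure ℝ := volume.restrict (Ioc 0 π)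

/-- Product Lebesgue measure on the quadruples of angles in `(0, π]`. -/
noncomputable abbrev angleMeasureFour : Measure (ℝ × ℝ × ℝ × ℝ) :=
  angleMeasure.prod (angleMeasure.prod (angleMeasure.prod angleMeasure))

/-- The sum of the cosines of four angles, the symbol of the simple cubic lattice. -/
noncomputable def cosSum (z : ℝ × ℝ × ℝ × ℝ) : ℝ := cos z.1 + cos z.2.1 + cos z.2.2.1 + cos z.2.2.2

lemma measurable_cosSum : Measurable cosSum := by
  unfold cosSum
  fun_prop

lemma cosSum_le_four (z : ℝ × ℝ × ℝ × ℝ) : cosSum z ≤ 4 := by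
  unfold cosSum
  linarith [cos_le_one z.1, cos_le_one z.2.1, cos_le_one z.2.2.1, cos_le_one z.2.2.2]

lemma ae_cosSum_lt_four : ∀ᵐ z ∂angleMeasureFour, cosSum z < 4 := by
  have hmem : ∀ᵐ z ∂angleMeasureFour, z.1 ∈ Ioc 0 π :=
    Measure.quasiMeasurePreserving_fst.ae (ae_restrict_mem measurableSet_Ioc)
  filter_upwards [hmem] with z hz
  have hcos : cos z.1 < 1 := by
    simpa using strictAntiOn_cos ⟨le_rfl, pi_pos.le⟩ ⟨hz.1.le, hz.2⟩ hz.1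
  unfold cosSum
  linarith [cos_le_one z.2.1, cos_le_one z.2.2.1, cos_le_one z.2.2.2]

lemma lintegral_exp_mul_cos (s : ℝ) :
    ∫⁻ p, ENNReal.ofReal (exp (s * cos p)) ∂angleMeasure = ENNReal.ofReal (π * I0 s) := by
  have hint : IntegrableOn (fun p ↦ exp (s * cos p)) (Ioc 0 π) :=
    (Continuous.integrableOn_Icc (by fun_prop)).mono_set Ioc_subset_Icc_self
  rw [← ofReal_integral_eq_lintegral_ofReal hint (.of_forall fun p ↦ by positivity), I0,
    intervalIntegral.integral_of_le pi_pos.le]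
  field_simp

lemma lintegral_exp_mul_cosSum (s : ℝ) :
    ∫⁻ z, ENNReal.ofReal (exp (s * cosSum z)) ∂angleMeasureFour =
      ENNReal.ofReal (π ^ 4 * I0 s ^ 4) := by
  have hexp (z : ℝ × ℝ × ℝ × ℝ) : ENNReal.ofReal (exp (s * cosSum z)) =
      ENNReal.ofReal (exp (s * cos z.1)) * (ENNReal.ofReal (exp (s * cos z.2.1)) *
        (ENNReal.ofReal (exp (s * cos z.2.2.1)) * ENNReal.ofReal (exp (s * cos z.2.2.2)))) := by
    simp only [← ENNReal.ofReal_mul (exp_pos _).le, ← exp_add, cosSum]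
    ring_nf
  simp only [hexp]
  rw [lintegral_prod_four_mul (g := fun p ↦ ENNReal.ofReal (exp (s * cos p))) (by fun_prop),
    lintegral_exp_mul_cos, ← ENNReal.ofReal_pow (mul_nonneg pi_pos.le (I0_nonneg s)), mul_pow]

lemma ofReal_one_div_one_sub_eq_lintegral {x S : ℝ} (h : x / 4 * S < 1) :
    ENNReal.ofReal (1 / (1 - x / 4 * S)) =
      ∫⁻ t in Ioi 0, ENNReal.ofReal (4 * exp (-(4 * t)) * exp (x * t * S)) := by
  have hlaplace := lintegral_const_mul_exp_neg_mul zero_le_four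
    (mul_pos (four_pos (α := ℝ)) (sub_pos.2 h))
  rw [div_mul_cancel_left₀ four_ne_zero, ← one_div] at hlaplace
  rw [← hlaplace]
  congr with t
  rw [mul_assoc 4 (exp _), ← exp_add]
  ring_nf

lemma div_four_mul_lt_one {x S : ℝ} (hx : x ∈ Icc 0 1) (hS : S < 4) : x / 4 * S < 1 := by
  obtain rfl | hpos := hx.1.eq_or_lt
  · simp
  · linarith [mul_lt_mul_of_pos_left hS (div_pos hpos four_pos), hx.2]

lemma lintegral_one_div_one_sub_cosSum {x : ℝ} (hx : x ∈ Icc 0 1) :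
    ∫⁻ z, ENNReal.ofReal (1 / (1 - x / 4 * cosSum z)) ∂angleMeasureFour =
      ENNReal.ofReal (4 * π ^ 4) * laplaceI0Pow 0 x := by
  have hmeas := measurable_cosSum
  calc ∫⁻ z, ENNReal.ofReal (1 / (1 - x / 4 * cosSum z)) ∂angleMeasureFour
      = ∫⁻ z, (∫⁻ t in Ioi (0 : ℝ),
          ENNReal.ofReal (4 * exp (-(4 * t)) * exp (x * t * cosSum z))) ∂angleMeasureFour :=
        lintegral_congr_ae (ae_cosSum_lt_four.mono fun z hz ↦
          ofReal_one_div_one_sub_eq_lintegral (div_four_mul_lt_one hx hz))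
    _ = ∫⁻ t in Ioi (0 : ℝ), ∫⁻ z,
          ENNReal.ofReal (4 * exp (-(4 * t)) * exp (x * t * cosSum z)) ∂angleMeasureFour :=
        lintegral_lintegral_swap (by fun_prop)
    _ = ENNReal.ofReal (4 * π ^ 4) * laplaceI0Pow 0 x := by
        rw [laplaceI0Pow, ← lintegral_const_mul' _ _ ENNReal.ofReal_ne_top]
        congr with t
        have hweight : 0 ≤ 4 * exp (-(4 * t)) := by positivity
        simp only [ENNReal.ofReal_mul hweight]
        rw [lintegral_const_mul' _ _ ENNReal.ofReal_ne_top, lintegral_exp_mul_cosSum,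
          ← ENNReal.ofReal_mul hweight, ← ENNReal.ofReal_mul (by positivity)]
        ring_nf

section WatsonIntegrand

variable {x : ℝ}

lemma one_div_one_sub_cosSum_nonneg (hx : x ∈ Icc 0 1) (z : ℝ × ℝ × ℝ × ℝ) :
    0 ≤ 1 / (1 - x / 4 * cosSum z) := by
  have hle : x / 4 * cosSum z ≤ 1 := by nlinarith [hx.1, hx.2, cosSum_le_four z]
  exact one_div_nonneg.2 (sub_nonneg.2 hle)

lemma integrable_one_div_one_sub_cosSum (hx : x ∈ Icc 0 1) :
    Integrable (fun z ↦ 1 / (1 - x / 4 * cosSum z)) angleMeasureFour := by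
  have hmeas := measurable_cosSum
  refine ⟨Measurable.aestronglyMeasurable (by fun_prop), ?_⟩
  rw [hasFiniteIntegral_iff_ofReal (.of_forall (one_div_one_sub_cosSum_nonneg hx)),
    lintegral_one_div_one_sub_cosSum hx]
  exact ENNReal.mul_lt_top ENNReal.ofReal_lt_top (laplaceI0Pow_zero_ne_top hx).lt_top

lemma integral_one_div_one_sub_cosSum (hx : x ∈ Icc 0 1) :
    ∫ z, 1 / (1 - x / 4 * cosSum z) ∂angleMeasureFour =
      4 * π ^ 4 * (laplaceI0Pow 0 x).toReal := by
  rw [integral_eq_lintegral_of_nonneg_ae (.of_forall (one_div_one_sub_cosSum_nonneg hx))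
      (integrable_one_div_one_sub_cosSum hx).aestronglyMeasurable,
    lintegral_one_div_one_sub_cosSum hx, ENNReal.toReal_mul, ENNReal.toReal_ofReal (by positivity)]

end WatsonIntegrand

theorem watson_integral_eq_bessel_moment :
    ∀ x ∈ Icc (0:ℝ) 1,
      (1 / (4 * π^4)) *
        (∫ p1 in (0:ℝ)..π, ∫ p2 in (0:ℝ)..π, ∫ p3 in (0:ℝ)..π, ∫ p4 in (0:ℝ)..π,
          1 / (1 - (x/4) * (cos p1 + cos p2 + cos p3 + cos p4)))
      = (4 / π^2) * ∫ t in Ioi (0:ℝ), (I0 (x*t))^2 * I0 t * (K0 t)^3 * t := by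
  intro x hx
  have hwatson := integral_one_div_one_sub_cosSum hx
  rw [integral_prod_four (integrable_one_div_one_sub_cosSum hx)] at hwatson
  simp only [cosSum] at hwatson
  simp only [intervalIntegral.integral_of_le pi_pos.le]
  rw [hwatson, integral_product_eq_mul_toReal_laplaceI0Pow, besselMoment_zero_zero]
  field_simp
  ring
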